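/- arXiv:math/0210332 — 2 statements merged into one kernel-verified Lean document; each statement's English description precedes it below -/
import Mathlib

section
/- Let a ∈ [0,1]. There exists a constant C > 0, depending only on a and the fixed dyadic cutoffs, such that for every Schwartz function f on ℝ² one has ‖f‖_{L^{2(3+a)}(ℝ²)} ≤ C ‖f‖_{X^{1/2}_0}. -/
/-!
The estimate is a Strichartz inequality for functions whose Fourier transform lives near the curve
`λ = ω(ξ)`, proved piece by piece in the modulation `λ - ω(ξ)`. Write `u = iFT G` for the
(unnormalised) inverse Fourier transform of `G`.

*Trilinear `L⁶` bound.* Let `G` be supported in `strip a M`, i.e. `ξ > 0` and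
`|λ - ξ ^ (2 + a)| ≤ M`. Then `u³` is the inverse transform of `G ⋆ G ⋆ G`, so by Plancherel and
Cauchy–Schwarz `‖u‖₆⁶` is at most a constant times `K (∫ ξ ^ (-a/3) |G|²)³`, where `K` is the
largest weighted measure of the set of ways to write a point as a sum of three points of the strip
(`L6_strip`). After integrating out the variables `λ` this is the measure of the part of a simplex
`ξ₁ + ξ₂ + ξ₃ = s` where `∑ ξᵢ ^ (2 + a)` lies in an interval of length `6 M`. In polar coordinates
around the barycentre that sum grows at least like `(s / 3) ^ a r²`
(`sum_rpow_ray`, `volume_simplexShell_le`), which gives `K = O(M³)` (`strip_conv_le`).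

*From `L⁶` to `L ^ (2 (3 + a))`.* Put `n = ‖G‖₂²`. The frequencies `ξ ≤ R` contribute at most
`(2 M R n) ^ (1/2)` to `u` pointwise, so for `R = t² / (8 M n)` the level `t` can only be exceeded
because of frequencies above `R`; Chebyshev's inequality in `L⁶` for that part bounds the level set
(`level_set_le`). Integrating over `t` and exchanging integrals yields `‖u‖ ≤ C (M n) ^ (1/2)` in
`L ^ (2 (3 + a))` (`Lq_strip`). Negative frequencies follow by reflection (`Lq_curve`).

*Summation.* For Schwartz `f` with transform `g`, the piece `χ_j(λ - ω(ξ)) g` lies within `2 · 2 ^ j`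
of the curve, so its contribution is at most a constant times the `j`-th term of the `X`-norm. The
triangle inequality for partial sums and Fatou's lemma conclude (`Lp_pieces`). The series of the
`X`-norm converges for Schwartz functions (`summable_pieces`), so its value is the genuine sum.
-/

open MeasureTheory Complex

noncomputable section

/-- The dispersive symbol `ω(ξ) = ξ |ξ|^(1+a)`. -/
def disp (a ξ : ℝ) : ℝ := ξ * |ξ| ^ (1 + a)

/-- Fourier transform on `ℝ`, convention `f̂(ξ) = ∫ e^{ixξ} f(x) dx`. -/
def FT1 (f : ℝ → ℂ) (ξ : ℝ) : ℂ :=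
  ∫ x : ℝ, Complex.exp (Complex.I * ((x * ξ : ℝ) : ℂ)) * f x

/-- Spacetime Fourier transform, convention `f̂(ξ,λ) = ∫ e^{i(xξ+tλ)} f(x,t) dx dt`,
for `f : ℝ × ℝ → ℂ` with first coordinate `x` (space) and second `t` (time). -/
def FT2 (f : ℝ × ℝ → ℂ) (ξ lam : ℝ) : ℂ :=
  ∫ p : ℝ × ℝ, Complex.exp (Complex.I * ((p.1 * ξ + p.2 * lam : ℝ) : ℂ)) * f p

/-- The dyadic cutoffs `χ_j`: `χ_0 = χ₀` and `χ_j(z) = χ(2^{-j} z)` for `j ≥ 1`. -/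
def chiJ (χ₀ χ : ℝ → ℝ) (j : ℕ) (z : ℝ) : ℝ :=
  if j = 0 then χ₀ z else χ ((2 : ℝ) ^ (-(j : ℝ)) * z)

/-- Hypotheses on the fixed dyadic cutoffs. -/
structure DyadicCutoffs (χ₀ χ : ℝ → ℝ) : Prop where
  smooth0 : ContDiff ℝ (⊤ : ℕ∞) χ₀
  even0 : ∀ z, χ₀ (-z) = χ₀ z
  mem0 : ∀ z, χ₀ z ∈ Set.Icc (0 : ℝ) 1
  supp0 : ∀ z, 2 < |z| → χ₀ z = 0
  one0 : ∀ z, |z| ≤ 1 → χ₀ z = 1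
  smooth1 : ContDiff ℝ (⊤ : ℕ∞) χ
  even1 : ∀ z, χ (-z) = χ z
  mem1 : ∀ z, χ z ∈ Set.Icc (0 : ℝ) 1
  supp1 : ∀ z, χ z ≠ 0 → 1 / 2 < |z| ∧ |z| < 2
  partition : ∀ z, ∑' j : ℕ, chiJ χ₀ χ j z = 1

/-- A smooth time cutoff supported in `[-1,1]`. -/
structure TimeCutoff (ψ : ℝ → ℝ) : Prop where
  smooth : ContDiff ℝ (⊤ : ℕ∞) ψ
  supp : ∀ t, ψ t ≠ 0 → |t| ≤ 1

/-- The norm `‖f‖_{X^b_s}`. -/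
def Xnorm (a : ℝ) (χ₀ χ : ℝ → ℝ) (b s : ℝ) (f : ℝ × ℝ → ℂ) : ℝ :=
  ∑' j : ℕ, (2 : ℝ) ^ ((j : ℝ) * b) *
    (∫ p : ℝ × ℝ, chiJ χ₀ χ j (p.2 - disp a p.1) * (1 + |p.1|) ^ (2 * s) *
      ‖FT2 f p.1 p.2‖ ^ 2) ^ ((1 : ℝ) / 2)

/-- The norm `‖f‖_{Y^b_{s₀,s₁}} = ‖x·f‖_{X^b_{s₀}} + ‖t·f‖_{X^b_{s₁}}`. -/
def Ynorm (a : ℝ) (χ₀ χ : ℝ → ℝ) (b s₀ s₁ : ℝ) (f : ℝ × ℝ → ℂ) : ℝ :=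
  Xnorm a χ₀ χ b s₀ (fun p => (p.1 : ℂ) * f p) +
    Xnorm a χ₀ χ b s₁ (fun p => (p.2 : ℂ) * f p)

/-- The norm `‖f‖_{Z^b_s} = ‖f‖_{X^b_s} + ‖f‖_{Y^b_{s-2s*,s}}`, where `s* = 1/2 + a/2`. -/
def Znorm (a : ℝ) (χ₀ χ : ℝ → ℝ) (b s : ℝ) (f : ℝ × ℝ → ℂ) : ℝ :=
  Xnorm a χ₀ χ b s f + Ynorm a χ₀ χ b (s - 2 * (1 / 2 + a / 2)) s f

/-- The norm `‖f‖_{X̃^b_s}`. -/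
def XtildeNorm (a b s : ℝ) (f : ℝ × ℝ → ℂ) : ℝ :=
  (∫ p : ℝ × ℝ, (1 + |p.2 - disp a p.1|) ^ (2 * b) * (1 + |p.1|) ^ (2 * s) *
    ‖FT2 f p.1 p.2‖ ^ 2) ^ ((1 : ℝ) / 2)

/-- The Sobolev norm `‖g‖_{H^s} = (∫ (1+|ξ|)^{2s} |ĝ(ξ)|² dξ)^{1/2}`. -/
def Hnorm (s : ℝ) (g : ℝ → ℂ) : ℝ :=
  (∫ ξ : ℝ, (1 + |ξ|) ^ (2 * s) * ‖FT1 g ξ‖ ^ 2) ^ ((1 : ℝ) / 2)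

/-- The weighted norm `‖g‖_{F^s} = ‖g‖_{H^s} + ‖x·g‖_{H^{s-2s*}}` (here `sstar = s*`). -/
def Fnorm (sstar s : ℝ) (g : ℝ → ℂ) : ℝ :=
  Hnorm s g + Hnorm (s - 2 * sstar) (fun x => (x : ℂ) * g x)

/-- The `L^p` norm `(∫ ‖f‖^p)^{1/p}`. -/
def Lpnorm {α : Type*} [MeasureSpace α] {E : Type*} [NormedAddCommGroup E]
    (p : ℝ) (f : α → E) : ℝ :=
  (∫ x, ‖f x‖ ^ p) ^ (1 / p)

/-- The linear propagator `W(t)`, defined via Fourier inversion so that its Fourier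
transform in `x` is `e^{itω(ξ)} û₀(ξ)`. -/
def Wgrp (a : ℝ) (u₀ : ℝ → ℂ) (t x : ℝ) : ℂ :=
  ((1 / (2 * Real.pi) : ℝ) : ℂ) *
    ∫ ξ : ℝ, Complex.exp (-(Complex.I * ((x * ξ : ℝ) : ℂ))) *
      (Complex.exp (Complex.I * ((t * disp a ξ : ℝ) : ℂ)) * FT1 u₀ ξ)

/-- The Fourier multiplier `D^σ` with symbol `|ξ|^σ`, via Fourier inversion. -/
def Dop (σ : ℝ) (g : ℝ → ℂ) (x : ℝ) : ℂ :=
  ((1 / (2 * Real.pi) : ℝ) : ℂ) *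
    ∫ ξ : ℝ, Complex.exp (-(Complex.I * ((x * ξ : ℝ) : ℂ))) *
      (((|ξ| ^ σ : ℝ) : ℂ) * FT1 g ξ)

/-! ### Measure of a shell in a simplex -/

/-- If `r²` oscillates by at most `L` on `S`, then the measure `r dr` of `S` is at most `L / 2`. -/
lemma radial_measure_le (S : Set ℝ) (hS : S ⊆ Set.Ioi 0) (L : ℝ)
    (h : ∀ r₁ ∈ S, ∀ r₂ ∈ S, r₂ ^ 2 - r₁ ^ 2 ≤ L) :
    ∫⁻ r in Set.Ioi (0 : ℝ), ENNReal.ofReal r * S.indicator 1 r ≤ ENNReal.ofReal (L / 2) := by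
  rcases S.eq_empty_or_nonempty with rfl | ⟨r₀, hr₀⟩
  · simp
  have hL : 0 ≤ L := by simpa using h r₀ hr₀ r₀ hr₀
  have hup : ∀ r₁ ∈ S, ∀ r₂ ∈ S, r₂ ≤ Real.sqrt (L + r₁ ^ 2) := fun r₁ h₁ r₂ h₂ =>
    Real.le_sqrt_of_sq_le (by linarith [h r₁ h₁ r₂ h₂])
  have hbdd : BddAbove S := ⟨_, fun r hr => hup r₀ hr₀ r hr⟩
  have hbddb : BddBelow S := ⟨0, fun r hr => le_of_lt (hS hr)⟩
  set β := sSup S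
  set α := sInf S
  have hα : 0 ≤ α := le_csInf ⟨r₀, hr₀⟩ fun r hr => le_of_lt (hS hr)
  have hαβ : α ≤ β := (csInf_le hbddb hr₀).trans (le_csSup hbdd hr₀)
  have hβ0 : 0 ≤ β := hα.trans hαβ
  have h1 : ∀ r₁ ∈ S, β ^ 2 - L ≤ r₁ ^ 2 := fun r₁ hr₁ => by
    have := csSup_le ⟨r₀, hr₀⟩ (hup r₁ hr₁)
    have := (Real.le_sqrt hβ0 (by positivity)).1 this
    linarith
  have h2 : Real.sqrt (β ^ 2 - L) ≤ α := le_csInf ⟨r₀, hr₀⟩ fun r hr =>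
    Real.sqrt_le_iff.2 ⟨le_of_lt (hS hr), h1 r hr⟩
  have h3 : β ^ 2 - L ≤ α ^ 2 := (Real.sqrt_le_iff.1 h2).2
  calc ∫⁻ r in Set.Ioi (0 : ℝ), ENNReal.ofReal r * S.indicator 1 r
      ≤ ∫⁻ r, (Set.Icc α β).indicator (fun r => ENNReal.ofReal r) r := by
        refine (setLIntegral_le_lintegral _ _).trans (lintegral_mono fun r => ?_)
        by_cases hr : r ∈ S
        · have : r ∈ Set.Icc α β := ⟨csInf_le hbddb hr, le_csSup hbdd hr⟩
          simp [hr, this]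
        · simp [hr]
    _ = ∫⁻ r in Set.Ioc α β, ENNReal.ofReal r := by
        rw [lintegral_indicator measurableSet_Icc, restrict_Ioc_eq_restrict_Icc]
    _ = ENNReal.ofReal (∫ r in α..β, r) := by
        rw [intervalIntegral.integral_of_le hαβ, ofReal_integral_eq_lintegral_ofReal]
        · exact (continuous_id.integrableOn_Icc (a := α) (b := β)).mono_set Set.Ioc_subset_Icc_self
        · filter_upwards [ae_restrict_mem measurableSet_Ioc] with r hr
          exact hα.trans hr.1.le
    _ ≤ ENNReal.ofReal (L / 2) := by
        rw [integral_id]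
        exact ENNReal.ofReal_le_ofReal (by linarith)

/-- The function `x ^ (2 + a) - (1 + a/2) y ^ a x ^ 2`, whose derivative
`(2 + a) x (x ^ a - y ^ a)` changes sign only at `x = y`. -/
def remFun (a y x : ℝ) : ℝ := x ^ (2 + a) - (2 + a) / 2 * y ^ a * x ^ 2

lemma hasDerivAt_remFun (a y x : ℝ) (hx : 0 < x) :
    HasDerivAt (remFun a y) ((2 + a) * x * (x ^ a - y ^ a)) x := by
  have h1 := Real.hasDerivAt_rpow_const (x := x) (p := 2 + a) (Or.inl hx.ne')
  have h2 := ((hasDerivAt_id x).pow 2).const_mul ((2 + a) / 2 * y ^ a)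
  refine (h1.sub h2).congr_deriv ?_
  rw [show 2 + a - 1 = 1 + a by ring, Real.rpow_add hx, Real.rpow_one]
  simp
  ring

lemma continuous_remFun (a y : ℝ) (ha : 0 ≤ a) : Continuous (remFun a y) := by
  unfold remFun
  have := Real.continuous_rpow_const (q := 2 + a) (by linarith)
  fun_prop

lemma remFun_monotoneOn (a y : ℝ) (ha : 0 ≤ a) (hy : 0 ≤ y) :
    MonotoneOn (remFun a y) (Set.Ici y) := by
  refine monotoneOn_of_deriv_nonneg (convex_Ici y) (continuous_remFun a y ha).continuousOn ?_ ?_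
  · intro x hx
    rw [interior_Ici] at hx
    exact (hasDerivAt_remFun a y x (hy.trans_lt hx)).differentiableAt.differentiableWithinAt
  · intro x hx
    rw [interior_Ici] at hx
    have hx0 := hy.trans_lt hx
    rw [(hasDerivAt_remFun a y x hx0).deriv]
    have := Real.rpow_le_rpow hy (le_of_lt hx) ha
    have : 0 ≤ x ^ a - y ^ a := by linarith
    positivity

lemma remFun_antitoneOn (a y : ℝ) (ha : 0 ≤ a) :
    AntitoneOn (remFun a y) (Set.Icc 0 y) := by
  refine antitoneOn_of_deriv_nonpos (convex_Icc 0 y) (continuous_remFun a y ha).continuousOn ?_ ?_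
  · intro x hx
    rw [interior_Icc] at hx
    exact (hasDerivAt_remFun a y x hx.1).differentiableAt.differentiableWithinAt
  · intro x hx
    rw [interior_Icc] at hx
    rw [(hasDerivAt_remFun a y x hx.1).deriv]
    have := Real.rpow_le_rpow hx.1.le hx.2.le ha
    have h2 : 0 ≤ (2 + a) * x := mul_nonneg (by linarith) hx.1.le
    exact mul_nonpos_of_nonneg_of_nonpos h2 (by linarith)

/-- `remFun a y` has its minimum over `[0, ∞)` at `y`, and grows along any ray from `y`. -/
lemma remFun_ray (a y e r₁ r₂ : ℝ) (ha : 0 ≤ a) (hy : 0 ≤ y) (h1 : 0 ≤ r₁) (h12 : r₁ ≤ r₂)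
    (h : 0 ≤ y + r₂ * e) : remFun a y (y + r₁ * e) ≤ remFun a y (y + r₂ * e) := by
  rcases le_total 0 e with he | he
  · have := mul_le_mul_of_nonneg_right h12 he
    have := mul_nonneg h1 he
    exact remFun_monotoneOn a y ha hy (by simp; linarith) (by simp; linarith) (by linarith)
  · have := mul_le_mul_of_nonpos_right h12 he
    have := mul_nonpos_of_nonneg_of_nonpos h1 he
    exact remFun_antitoneOn a y ha ⟨h, by linarith⟩ ⟨by linarith, by linarith⟩ (by linarith)

/-- Along a ray from the barycentre `(y, y, y)` of a simplex, `∑ ξᵢ ^ (2 + a)` grows at least like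
`y ^ a r²`: the linear terms cancel because the directions add up to zero. -/
lemma sum_rpow_ray (a y e₁ e₂ r₁ r₂ : ℝ) (ha : 0 ≤ a) (hy : 0 ≤ y) (h1 : 0 ≤ r₁) (h12 : r₁ ≤ r₂)
    (he : e₁ ^ 2 + e₂ ^ 2 = 1)
    (hp₁ : 0 ≤ y + r₂ * e₁) (hp₂ : 0 ≤ y + r₂ * e₂) (hp₃ : 0 ≤ y + r₂ * (-e₁ - e₂)) :
    y ^ a * (r₂ ^ 2 - r₁ ^ 2) ≤
      ((y + r₂ * e₁) ^ (2 + a) + (y + r₂ * e₂) ^ (2 + a) + (y + r₂ * (-e₁ - e₂)) ^ (2 + a)) -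
      ((y + r₁ * e₁) ^ (2 + a) + (y + r₁ * e₂) ^ (2 + a) + (y + r₁ * (-e₁ - e₂)) ^ (2 + a)) := by
  have k1 := remFun_ray a y e₁ r₁ r₂ ha hy h1 h12 hp₁
  have k2 := remFun_ray a y e₂ r₁ r₂ ha hy h1 h12 hp₂
  have k3 := remFun_ray a y (-e₁ - e₂) r₁ r₂ ha hy h1 h12 hp₃
  unfold remFun at k1 k2 k3
  have hya : 0 ≤ y ^ a := Real.rpow_nonneg hy a
  have hr : 0 ≤ r₂ ^ 2 - r₁ ^ 2 := by nlinarith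
  have hk : 1 ≤ (2 + a) / 2 * (1 + (e₁ + e₂) ^ 2) := by nlinarith [sq_nonneg (e₁ + e₂)]
  have key : y ^ a * (r₂ ^ 2 - r₁ ^ 2) * 1
      ≤ y ^ a * (r₂ ^ 2 - r₁ ^ 2) * ((2 + a) / 2 * (1 + (e₁ + e₂) ^ 2)) :=
    mul_le_mul_of_nonneg_left hk (by positivity)
  have hid : (2 + a) / 2 * y ^ a * ((y + r₂ * e₁) ^ 2 + (y + r₂ * e₂) ^ 2
      + (y + r₂ * (-e₁ - e₂)) ^ 2 - ((y + r₁ * e₁) ^ 2 + (y + r₁ * e₂) ^ 2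
      + (y + r₁ * (-e₁ - e₂)) ^ 2))
      = y ^ a * (r₂ ^ 2 - r₁ ^ 2) * ((2 + a) / 2 * (1 + (e₁ + e₂) ^ 2)) := by
    rw [← he]; ring
  linarith

/-- The part of the simplex of size `s` on which `∑ ξᵢ ^ (2 + a)` lies within `M` of `c`,
parametrised by the first two coordinates. -/
def simplexShell (a s c M : ℝ) : Set (ℝ × ℝ) :=
  {p | 0 < p.1 ∧ 0 < p.2 ∧ 0 < s - p.1 - p.2 ∧
    |p.1 ^ (2 + a) + p.2 ^ (2 + a) + (s - p.1 - p.2) ^ (2 + a) - c| ≤ M}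

lemma measurableSet_simplexShell (a s c M : ℝ) : MeasurableSet (simplexShell a s c M) := by
  unfold simplexShell
  refine MeasurableSet.inter ?_ (MeasurableSet.inter ?_ (MeasurableSet.inter ?_ ?_))
  · exact measurableSet_lt measurable_const measurable_fst
  · exact measurableSet_lt measurable_const measurable_snd
  · exact measurableSet_lt (g := fun p : ℝ × ℝ => s - p.1 - p.2) measurable_const (by fun_prop)
  · exact measurableSet_le (f := fun p : ℝ × ℝ =>
      |p.1 ^ (2 + a) + p.2 ^ (2 + a) + (s - p.1 - p.2) ^ (2 + a) - c|) (by fun_prop) measurable_const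

/-- In polar coordinates around the barycentre `(s / 3, s / 3)`, each ray meets the shell in a set
on which `r²` oscillates by at most `2 M / (s / 3) ^ a`. -/
lemma volume_simplexShell_le (a s c M : ℝ) (ha : 0 ≤ a) (hs : 0 < s) :
    volume (simplexShell a s c M) ≤
      ENNReal.ofReal (M / (s / 3) ^ a) * ENNReal.ofReal (2 * Real.pi) := by
  set T := simplexShell a s c M with hT
  have hTm : MeasurableSet T := measurableSet_simplexShell a s c M
  set y := s / 3 with hy
  have hy0 : 0 < y := by positivity
  have hya : 0 < y ^ a := Real.rpow_pos_of_pos hy0 a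
  rw [← lintegral_indicator_one hTm, ← lintegral_add_left_eq_self _ ((y, y) : ℝ × ℝ),
    ← lintegral_comp_polarCoord_symm, polarCoord_target]
  simp only [polarCoord_symm_apply, smul_eq_mul, Prod.mk_add_mk]
  rw [Measure.volume_eq_prod, ← Measure.prod_restrict, lintegral_prod_symm']
  swap
  · refine Measurable.mul (by fun_prop) ?_
    exact (measurable_one.indicator hTm).comp (by fun_prop)
  calc _ ≤ ∫⁻ θ in Set.Ioo (-Real.pi) Real.pi, ENNReal.ofReal (M / y ^ a) := by
        refine lintegral_mono fun θ => ?_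
        set S : Set ℝ := {r | 0 < r ∧ (y + r * Real.cos θ, y + r * Real.sin θ) ∈ T} with hS
        have hmono : ∀ r₁ ∈ S, ∀ r₂ ∈ S, r₂ ^ 2 - r₁ ^ 2 ≤ 2 * M / y ^ a := by
          rintro r₁ ⟨h1, -, -, -, m1⟩ r₂ ⟨h2, p1, p2, p3, m2⟩
          rw [le_div_iff₀ hya]
          simp only at p1 p2 p3 m1 m2
          have e3 : ∀ r : ℝ, s - (y + r * Real.cos θ) - (y + r * Real.sin θ)
              = y + r * (-Real.cos θ - Real.sin θ) := fun r => by rw [hy]; ring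
          rw [e3] at p3 m1 m2
          have hM := (abs_nonneg _).trans m1
          rcases le_total r₁ r₂ with h12 | h12
          · have := sum_rpow_ray a y (Real.cos θ) (Real.sin θ) r₁ r₂ ha hy0.le h1.le h12
              (Real.cos_sq_add_sin_sq θ) p1.le p2.le p3.le
            linarith [(abs_le.1 m1).1, (abs_le.1 m2).2]
          · have : r₂ ^ 2 - r₁ ^ 2 ≤ 0 := by nlinarith
            have := mul_nonpos_of_nonpos_of_nonneg this hya.le
            linarith
        have := radial_measure_le S (fun r hr => hr.1) _ hmono
        rw [show 2 * M / y ^ a / 2 = M / y ^ a by ring] at this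
        refine le_trans (le_of_eq ?_) this
        refine setLIntegral_congr_fun measurableSet_Ioi fun r hr => ?_
        have hr' : 0 < r := hr
        by_cases hm : (y + r * Real.cos θ, y + r * Real.sin θ) ∈ T
        · have : r ∈ S := ⟨hr', hm⟩
          simp [hm, this]
        · have : r ∉ S := fun h => hm h.2
          simp [hm, this]
    _ = _ := by
        rw [setLIntegral_const, Real.volume_Ioo]
        congr 2
        ring

/-! ### The inverse Fourier transform on the plane -/

/-- The character `e^{-i z·p}` of `ℝ²`. -/
def ph (z p : ℝ × ℝ) : ℂ := Complex.exp (-(Complex.I * ((z.1 * p.1 + z.2 * p.2 : ℝ) : ℂ)))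

/-- The unnormalised inverse Fourier transform `z ↦ ∫ e^{-i z·p} G(p) dp` on `ℝ²`. -/
def iFT (G : ℝ × ℝ → ℂ) (z : ℝ × ℝ) : ℂ := ∫ p : ℝ × ℝ, ph z p * G p

lemma norm_ph (z p : ℝ × ℝ) : ‖ph z p‖ = 1 := by
  rw [ph, Complex.norm_exp]
  simp

lemma enorm_ph (z p : ℝ × ℝ) : ‖ph z p‖ₑ = 1 := by
  rw [← ofReal_norm, norm_ph]; simp

@[fun_prop]
lemma continuous_ph : Continuous (fun w : (ℝ × ℝ) × (ℝ × ℝ) => ph w.1 w.2) := by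
  unfold ph; fun_prop

lemma continuous_ph_left (p : ℝ × ℝ) : Continuous (fun z => ph z p) := by
  unfold ph; fun_prop

lemma continuous_ph_right (z : ℝ × ℝ) : Continuous (fun p => ph z p) := by
  unfold ph; fun_prop

lemma ph_add (z p q : ℝ × ℝ) : ph z (p + q) = ph z p * ph z q := by
  simp only [ph, ← Complex.exp_add]
  congr 1
  simp
  ring

lemma ph_mul_conj (z p q : ℝ × ℝ) : ph z p * (starRingEnd ℂ) (ph z q) = ph z (p - q) := by
  simp only [ph, ← Complex.exp_conj, ← Complex.exp_add]
  congr 1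
  simp
  ring

lemma ph_neg_neg (z p : ℝ × ℝ) : ph (-z) (-p) = ph z p := by
  simp [ph]

lemma integrable_ph_mul {G : ℝ × ℝ → ℂ} (hG : Integrable G) (z : ℝ × ℝ) :
    Integrable (fun p => ph z p * G p) := by
  refine hG.norm.mono' ((continuous_ph_right z).aestronglyMeasurable.mul hG.1) ?_
  filter_upwards with p
  simp [norm_ph]

lemma continuous_iFT {G : ℝ × ℝ → ℂ} (hG : Integrable G) : Continuous (iFT G) := by
  refine continuous_of_dominated (bound := fun p => ‖G p‖)
    (fun z => (integrable_ph_mul hG z).1) (fun z => ?_) hG.norm ?_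
  · filter_upwards with p
    simp [norm_ph]
  · filter_upwards with p
    exact (continuous_ph_left p).mul continuous_const

lemma norm_iFT_le (G : ℝ × ℝ → ℂ) (z : ℝ × ℝ) : ‖iFT G z‖ ≤ ∫ p, ‖G p‖ := by
  refine (norm_integral_le_integral_norm _).trans (le_of_eq ?_)
  simp [norm_ph]

lemma enorm_iFT_le (G : ℝ × ℝ → ℂ) (z : ℝ × ℝ) : ‖iFT G z‖ₑ ≤ ∫⁻ p, ‖G p‖ₑ := by
  refine (enorm_integral_le_lintegral_enorm _).trans (le_of_eq ?_)
  simp [enorm_ph]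

lemma iFT_add {F G : ℝ × ℝ → ℂ} (hF : Integrable F) (hG : Integrable G) (z : ℝ × ℝ) :
    iFT (fun p => F p + G p) z = iFT F z + iFT G z := by
  simp only [iFT, mul_add]
  exact integral_add (integrable_ph_mul hF z) (integrable_ph_mul hG z)

lemma iFT_comp_neg (G : ℝ × ℝ → ℂ) (z : ℝ × ℝ) :
    iFT (fun p => G (-p)) (-z) = iFT G z := by
  unfold iFT
  rw [← integral_neg_eq_self]
  simp [ph_neg_neg]

open scoped Convolution in
lemma iFT_convolution {F G : ℝ × ℝ → ℂ} (hF : Integrable F) (hG : Integrable G) (z : ℝ × ℝ) :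
    iFT (F ⋆[ContinuousLinearMap.mul ℂ ℂ] G) z = iFT F z * iFT G z := by
  have h := integral_convolution (μ := volume) (ν := volume) (ContinuousLinearMap.mul ℂ ℂ)
    (integrable_ph_mul hF z) (integrable_ph_mul hG z)
  simp only [ContinuousLinearMap.mul_apply'] at h
  rw [iFT, iFT, iFT, ← h]
  congr 1
  ext x
  simp only [convolution_def, ContinuousLinearMap.mul_apply', ← integral_const_mul]
  congr 1
  ext t
  have : ph z x = ph z t * ph z (x - t) := by rw [← ph_add]; simp
  rw [this]; ring

/-! ### The Plancherel inequality -/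

/-- The Gaussian `e^{-ε|z|²}` on `ℝ²`. -/
def gauss (ε : ℝ) (z : ℝ × ℝ) : ℝ := Real.exp (-ε * z.1 ^ 2) * Real.exp (-ε * z.2 ^ 2)

lemma gauss_nonneg (ε : ℝ) (z : ℝ × ℝ) : 0 ≤ gauss ε z := by unfold gauss; positivity

lemma continuous_gauss (ε : ℝ) : Continuous (gauss ε) := by unfold gauss; fun_prop

lemma integrable_gauss {ε : ℝ} (hε : 0 < ε) : Integrable (gauss ε) :=
  (integrable_exp_neg_mul_sq hε).mul_prod (integrable_exp_neg_mul_sq hε)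

lemma integral_gauss {ε : ℝ} (hε : 0 < ε) : ∫ z, gauss ε z = Real.pi / ε := by
  unfold gauss
  rw [Measure.volume_eq_prod, integral_prod_mul (fun x : ℝ => Real.exp (-ε * x ^ 2))
    (fun x : ℝ => Real.exp (-ε * x ^ 2)), integral_gaussian, Real.mul_self_sqrt (by positivity)]

/-- The Fourier transform of `gauss ε` is again a Gaussian. -/
lemma enorm_iFT_gauss {ε : ℝ} (hε : 0 < ε) (p : ℝ × ℝ) :
    ‖∫ z, (gauss ε z : ℂ) * ph z p‖ₑ
      = ENNReal.ofReal (Real.pi / ε * gauss (1 / (4 * ε)) p) := by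
  have h1 : ∀ t : ℝ, ‖∫ x : ℝ, Complex.exp (Complex.I * (-t : ℝ) * x) *
      Complex.exp (-(ε : ℂ) * (x : ℂ) ^ 2)‖ = Real.sqrt (Real.pi / ε) *
        Real.exp (-(1 / (4 * ε)) * t ^ 2) := by
    intro t
    rw [fourierIntegral_gaussian (by simpa using hε), norm_mul, Complex.norm_exp]
    congr 1
    · rw [← Complex.ofReal_div, Complex.norm_cpow_eq_rpow_re_of_pos (by positivity),
        Real.sqrt_eq_rpow]
      norm_num
    · congr 1
      rw [show (-((-t : ℝ) : ℂ) ^ 2 / (4 * (ε : ℂ))) = ((-(1 / (4 * ε)) * t ^ 2 : ℝ) : ℂ) by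
        push_cast; field_simp; try ring, Complex.ofReal_re]
  have h2 : ∫ z, (gauss ε z : ℂ) * ph z p =
      (∫ x : ℝ, Complex.exp (Complex.I * (-p.1 : ℝ) * x) * Complex.exp (-(ε : ℂ) * (x : ℂ) ^ 2)) *
      (∫ x : ℝ, Complex.exp (Complex.I * (-p.2 : ℝ) * x) *
        Complex.exp (-(ε : ℂ) * (x : ℂ) ^ 2)) := by
    rw [← integral_prod_mul, Measure.volume_eq_prod]
    congr 1
    ext z
    simp only [gauss, ph, ofReal_mul, Complex.ofReal_exp, ← Complex.exp_add]
    congr 1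
    push_cast
    ring
  rw [h2, ← ofReal_norm, norm_mul, h1, h1]
  congr 1
  rw [gauss]
  calc _ = (Real.sqrt (Real.pi / ε) * Real.sqrt (Real.pi / ε)) *
      (Real.exp (-(1 / (4 * ε)) * p.1 ^ 2) * Real.exp (-(1 / (4 * ε)) * p.2 ^ 2)) := by ring
    _ = _ := by rw [Real.mul_self_sqrt (by positivity)]

lemma lintegral_enorm_iFT_gauss {ε : ℝ} (hε : 0 < ε) :
    ∫⁻ p, ‖∫ z, (gauss ε z : ℂ) * ph z p‖ₑ = ENNReal.ofReal (4 * Real.pi ^ 2) := by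
  simp_rw [enorm_iFT_gauss hε]
  rw [← ofReal_integral_eq_lintegral_ofReal]
  · rw [integral_const_mul, integral_gauss (by positivity)]
    congr 1
    field_simp
  · exact (integrable_gauss (by positivity)).const_mul _
  · filter_upwards with p
    exact mul_nonneg (by positivity) (gauss_nonneg _ _)

/-- Schur's test for a convolution kernel, with a non-optimal factor `2`. -/
lemma schur_le {K : ℝ × ℝ → ENNReal} (hK : Measurable K)
    {h : ℝ × ℝ → ENNReal} (hh : AEMeasurable h) :
    ∫⁻ w : (ℝ × ℝ) × (ℝ × ℝ), h w.1 * h w.2 * K (w.1 - w.2)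
      ≤ 2 * ((∫⁻ p, K p) * ∫⁻ p, h p ^ 2) := by
  have hK2 : Measurable (fun w : (ℝ × ℝ) × (ℝ × ℝ) => K (w.1 - w.2)) := hK.comp (by fun_prop)
  have h1 : AEMeasurable (fun w : (ℝ × ℝ) × (ℝ × ℝ) => h w.1 ^ 2 * K (w.1 - w.2)) :=
    ((hh.comp_fst).pow_const 2).mul hK2.aemeasurable
  have h2 : AEMeasurable (fun w : (ℝ × ℝ) × (ℝ × ℝ) => h w.2 ^ 2 * K (w.1 - w.2)) :=
    ((hh.comp_snd).pow_const 2).mul hK2.aemeasurable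
  have amgm : ∀ x y : ENNReal, x * y ≤ x ^ 2 + y ^ 2 := fun x y => by
    rcases le_total x y with h | h
    · refine le_trans ?_ le_add_self
      rw [sq]; gcongr
    · refine le_trans ?_ le_self_add
      rw [sq]; gcongr
  calc ∫⁻ w : (ℝ × ℝ) × (ℝ × ℝ), h w.1 * h w.2 * K (w.1 - w.2)
      ≤ ∫⁻ w : (ℝ × ℝ) × (ℝ × ℝ), ((h w.1 ^ 2 * K (w.1 - w.2))
          + (h w.2 ^ 2 * K (w.1 - w.2))) := by
        refine lintegral_mono fun w => ?_
        refine (mul_le_mul_left (amgm (h w.1) (h w.2)) _).trans (le_of_eq ?_)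
        ring
    _ = (∫⁻ w : (ℝ × ℝ) × (ℝ × ℝ), h w.1 ^ 2 * K (w.1 - w.2))
        + (∫⁻ w : (ℝ × ℝ) × (ℝ × ℝ), h w.2 ^ 2 * K (w.1 - w.2)) := by
        rw [lintegral_add_left' h1]
    _ = ((∫⁻ p, K p) * ∫⁻ p, h p ^ 2) + ((∫⁻ p, K p) * ∫⁻ p, h p ^ 2) := by
        congr 1
        · rw [Measure.volume_eq_prod, lintegral_prod _ h1]
          have : ∀ x : ℝ × ℝ, ∫⁻ y, h x ^ 2 * K (x - y) = h x ^ 2 * ∫⁻ p, K p := fun x => by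
            rw [lintegral_const_mul _ (by fun_prop), lintegral_sub_left_eq_self]
          simp only [this]
          rw [lintegral_mul_const'' _ (hh.pow_const 2), mul_comm]
        · rw [Measure.volume_eq_prod, lintegral_prod_symm _ h2]
          have : ∀ y : ℝ × ℝ, ∫⁻ x, h y ^ 2 * K (x - y) = h y ^ 2 * ∫⁻ p, K p := fun y => by
            rw [lintegral_const_mul _ (by fun_prop), lintegral_sub_right_eq_self]
          simp only [this]
          rw [lintegral_mul_const'' _ (hh.pow_const 2), mul_comm]
    _ = _ := by
        rw [two_mul]

/-- Expanding the square and integrating in `z` first leaves a quadratic form in `H` whose kernel is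
the transform of the Gaussian, of total mass `4 π²` independently of `ε`. -/
lemma plancherel_gauss {H : ℝ × ℝ → ℂ} (hH : Integrable H) {ε : ℝ} (hε : 0 < ε) :
    ∫⁻ z, ‖iFT H z‖ₑ ^ 2 * ENNReal.ofReal (gauss ε z)
      ≤ 2 * (ENNReal.ofReal (4 * Real.pi ^ 2) * ∫⁻ p, ‖H p‖ₑ ^ 2) := by
  set Φ : ℝ × ℝ → (ℝ × ℝ) × (ℝ × ℝ) → ℂ := fun z w =>
    (gauss ε z : ℂ) * (ph z (w.1 - w.2) * (H w.1 * (starRingEnd ℂ) (H w.2))) with hΦ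
  have hHc : Integrable (fun q => (starRingEnd ℂ) (H q)) :=
    hH.norm.mono' (Complex.continuous_conj.comp_aestronglyMeasurable hH.1)
      (by filter_upwards with p; simp)
  have hHH : Integrable (fun w : (ℝ × ℝ) × (ℝ × ℝ) => H w.1 * (starRingEnd ℂ) (H w.2)) :=
    hH.mul_prod hHc
  have hInt : Integrable (Function.uncurry Φ) := by
    have h0 := (integrable_gauss hε).ofReal (𝕜 := ℂ).mul_prod hHH
    refine h0.norm.mono' ?_ ?_
    · have : Continuous (fun x : (ℝ × ℝ) × ((ℝ × ℝ) × (ℝ × ℝ)) => ph x.1 (x.2.1 - x.2.2)) := by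
        fun_prop
      refine (this.aestronglyMeasurable.mul h0.1).congr ?_
      filter_upwards with x
      simp [Φ, Function.uncurry]
      ring
    · filter_upwards with x
      simp [Φ, Function.uncurry, norm_ph]
  have hz : ∀ z, ∫ w, Φ z w = ((gauss ε z * ‖iFT H z‖ ^ 2 : ℝ) : ℂ) := by
    intro z
    have e : ∀ w : (ℝ × ℝ) × (ℝ × ℝ), Φ z w =
        (gauss ε z : ℂ) * ((ph z w.1 * H w.1) * ((starRingEnd ℂ) (ph z w.2 * H w.2))) := by
      intro w
      simp only [Φ, ← ph_mul_conj, map_mul]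
      ring
    simp_rw [e]
    rw [integral_const_mul, Measure.volume_eq_prod,
      integral_prod_mul (fun p => ph z p * H p) (fun p => (starRingEnd ℂ) (ph z p * H p)),
      integral_conj]
    change (gauss ε z : ℂ) * (iFT H z * (starRingEnd ℂ) (iFT H z)) = _
    rw [Complex.mul_conj, Complex.normSq_eq_norm_sq]
    push_cast
    rfl
  have hw : ∀ w : (ℝ × ℝ) × (ℝ × ℝ), ∫ z, Φ z w =
      (∫ z, (gauss ε z : ℂ) * ph z (w.1 - w.2)) * (H w.1 * (starRingEnd ℂ) (H w.2)) := by
    intro w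
    rw [← integral_mul_const]
    congr 1
    ext z
    simp only [Φ]
    ring
  have hgi : Integrable (fun z => gauss ε z * ‖iFT H z‖ ^ 2) := by
    refine ((integrable_gauss hε).mul_const ((∫ p, ‖H p‖) ^ 2)).mono'
      (((continuous_gauss ε).mul ((continuous_iFT hH).norm.pow 2)).aestronglyMeasurable) ?_
    filter_upwards with z
    have := norm_iFT_le H z
    rw [Real.norm_of_nonneg (mul_nonneg (gauss_nonneg _ _) (by positivity))]
    exact mul_le_mul_of_nonneg_left (pow_le_pow_left₀ (norm_nonneg _) this 2) (gauss_nonneg _ _)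
  have hsw := integral_integral_swap hInt
  simp_rw [hz, hw] at hsw
  have hsw : ((∫ z, gauss ε z * ‖iFT H z‖ ^ 2 : ℝ) : ℂ) = _ := integral_ofReal.symm.trans hsw
  have hK : Continuous (fun p => ∫ z, (gauss ε z : ℂ) * ph z p) := by
    refine continuous_of_dominated (bound := gauss ε) (fun p => ?_) (fun p => ?_)
      (integrable_gauss hε) ?_
    · exact ((Complex.continuous_ofReal.comp (continuous_gauss ε)).mul
        (continuous_ph_left p)).aestronglyMeasurable
    · filter_upwards with z
      simp [norm_ph, abs_of_nonneg (gauss_nonneg ε z)]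
    · filter_upwards with z
      exact continuous_const.mul (continuous_ph_right z)
  calc ∫⁻ z, ‖iFT H z‖ₑ ^ 2 * ENNReal.ofReal (gauss ε z)
      = ∫⁻ z, ENNReal.ofReal (gauss ε z * ‖iFT H z‖ ^ 2) := by
        refine lintegral_congr fun z => ?_
        rw [ENNReal.ofReal_mul (gauss_nonneg _ _), ENNReal.ofReal_pow (norm_nonneg _),
          ofReal_norm, mul_comm]
    _ = ENNReal.ofReal (∫ z, gauss ε z * ‖iFT H z‖ ^ 2) := by
        rw [ofReal_integral_eq_lintegral_ofReal hgi]
        filter_upwards with z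
        exact mul_nonneg (gauss_nonneg _ _) (by positivity)
    _ ≤ ‖((∫ z, gauss ε z * ‖iFT H z‖ ^ 2 : ℝ) : ℂ)‖ₑ := by
        rw [← ofReal_norm, Complex.norm_real]
        exact ENNReal.ofReal_le_ofReal (le_abs_self _)
    _ ≤ ∫⁻ w : (ℝ × ℝ) × (ℝ × ℝ),
          ‖H w.1‖ₑ * ‖H w.2‖ₑ * ‖∫ z, (gauss ε z : ℂ) * ph z (w.1 - w.2)‖ₑ := by
        refine (le_of_eq (congrArg _ hsw)).trans
          ((enorm_integral_le_lintegral_enorm _).trans (le_of_eq (lintegral_congr fun w => ?_)))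
        simp only [enorm_mul, RCLike.enorm_conj]
        ring
    _ ≤ _ := by
        rw [← lintegral_enorm_iFT_gauss hε]
        exact schur_le (K := fun p => ‖∫ z, (gauss ε z : ℂ) * ph z p‖ₑ)
          hK.enorm.measurable hH.1.enorm

/-- The upper half of Plancherel's theorem for integrable functions, with a non-optimal constant. -/
lemma plancherel_le {H : ℝ × ℝ → ℂ} (hH : Integrable H) :
    ∫⁻ z, ‖iFT H z‖ₑ ^ 2 ≤ 2 * (ENNReal.ofReal (4 * Real.pi ^ 2) * ∫⁻ p, ‖H p‖ₑ ^ 2) := by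
  set ε : ℕ → ℝ := fun n => 1 / ((n : ℝ) + 1)
  have hε : ∀ n, 0 < ε n := fun n => by positivity
  have hlim : ∀ z, Filter.Tendsto (fun n => ‖iFT H z‖ₑ ^ 2 * ENNReal.ofReal (gauss (ε n) z))
      Filter.atTop (nhds (‖iFT H z‖ₑ ^ 2)) := by
    intro z
    have h0 : Filter.Tendsto ε Filter.atTop (nhds 0) := tendsto_one_div_add_atTop_nhds_zero_nat
    have hc : Continuous (fun e : ℝ => ENNReal.ofReal (gauss e z)) := by
      unfold gauss
      exact ENNReal.continuous_ofReal.comp (by fun_prop)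
    have h1 := (hc.tendsto 0).comp h0
    have h2 := ENNReal.Tendsto.const_mul (a := ‖iFT H z‖ₑ ^ 2) h1 (Or.inl (by simp [gauss]))
    simpa [gauss, Function.comp_def] using h2
  calc ∫⁻ z, ‖iFT H z‖ₑ ^ 2
      = ∫⁻ z, Filter.liminf (fun n => ‖iFT H z‖ₑ ^ 2 * ENNReal.ofReal (gauss (ε n) z))
          Filter.atTop := lintegral_congr fun z => (hlim z).liminf_eq.symm
    _ ≤ Filter.liminf (fun n => ∫⁻ z, ‖iFT H z‖ₑ ^ 2 * ENNReal.ofReal (gauss (ε n) z))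
          Filter.atTop := by
        refine lintegral_liminf_le fun n => ?_
        exact ((continuous_iFT hH).enorm.measurable.pow_const 2).mul
          (continuous_gauss _).measurable.ennreal_ofReal
    _ ≤ _ := by
        refine Filter.liminf_le_of_le (by isBoundedDefault) fun b hb => ?_
        obtain ⟨n, hn⟩ := hb.exists
        exact hn.trans (plancherel_gauss hH (hε n))

/-! ### Sums of three points of a strip -/

/-- The part `ξ > 0` of the `M`-neighbourhood of the curve `λ = ξ ^ (2 + a)`. -/
def strip (a M : ℝ) : Set (ℝ × ℝ) := {p | 0 < p.1 ∧ |p.2 - p.1 ^ (2 + a)| ≤ M}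

lemma measurableSet_strip (a M : ℝ) : MeasurableSet (strip a M) := by
  refine MeasurableSet.inter ?_ ?_
  · exact measurableSet_lt measurable_const measurable_fst
  · exact measurableSet_le (f := fun p : ℝ × ℝ => |p.2 - p.1 ^ (2 + a)|) (by fun_prop)
      measurable_const

lemma lintegral_band (c M : ℝ) :
    ∫⁻ x : ℝ, {x | |x - c| ≤ M}.indicator 1 x = ENNReal.ofReal (2 * M) := by
  have : {x : ℝ | |x - c| ≤ M} = Set.Icc (c - M) (c + M) := by
    ext x
    simp only [Set.mem_ofPred_eq, abs_le, Set.mem_Icc]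
    constructor <;> rintro ⟨h1, h2⟩ <;> constructor <;> linarith
  rw [this, lintegral_indicator_one measurableSet_Icc, Real.volume_Icc]
  congr 1
  ring

set_option maxHeartbeats 800000 in
/-- The weighted measure of the set of ways of writing `P` as a sum of three points of the strip
is `O(M³)`, uniformly in `P = (s, τ)`: two `λ`-integrals give `M²`, the shell of the simplex of
size `s` gives `M s ^ (-a)`, and the weights are at most `s ^ a`. -/
lemma strip_conv_le (a M : ℝ) (ha : a ∈ Set.Icc (0 : ℝ) 1) (hM : 0 ≤ M) (P : ℝ × ℝ) :
    ∫⁻ w : (ℝ × ℝ) × (ℝ × ℝ),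
      (strip a M).indicator (fun p => ENNReal.ofReal (p.1 ^ (a / 3))) w.1 *
      (strip a M).indicator (fun p => ENNReal.ofReal (p.1 ^ (a / 3))) w.2 *
      (strip a M).indicator (fun p => ENNReal.ofReal (p.1 ^ (a / 3))) (P - w.1 - w.2)
      ≤ ENNReal.ofReal (72 * Real.pi * M ^ 3) := by
  obtain ⟨s, τ⟩ := P
  obtain ⟨ha0, ha1⟩ := ha
  set A := (strip a M).indicator (fun p : ℝ × ℝ => ENNReal.ofReal (p.1 ^ (a / 3))) with hA
  rcases le_or_gt s 0 with hs | hs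
  -- three positive numbers cannot add up to `s ≤ 0`
  · refine le_trans (le_of_eq ?_) (zero_le (a := ENNReal.ofReal (72 * Real.pi * M ^ 3)))
    refine lintegral_eq_zero_of_ae_eq_zero (Filter.Eventually.of_forall fun w => ?_)
    by_cases h1 : w.1 ∈ strip a M
    · by_cases h2 : w.2 ∈ strip a M
      · have h3 : (s, τ) - w.1 - w.2 ∉ strip a M := by
          intro h3
          have := h1.1; have := h2.1; have := h3.1
          simp only [Prod.fst_sub] at this
          linarith
        simp [A, h3]
      · simp [A, h2]
    · simp [A, h1]
  set T := simplexShell a s τ (3 * M) with hT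
  have hTm : MeasurableSet T := measurableSet_simplexShell _ _ _ _
  set J : ℝ → ℝ → ENNReal := fun x l => {l | |l - x ^ (2 + a)| ≤ M}.indicator 1 l with hJ
  have hJm : Measurable (fun p : ℝ × ℝ => J p.1 p.2) := by
    have : (fun p : ℝ × ℝ => J p.1 p.2)
        = {p : ℝ × ℝ | |p.2 - p.1 ^ (2 + a)| ≤ M}.indicator 1 := by
      ext p; simp [J, Set.indicator]
    rw [this]
    refine measurable_one.indicator ?_
    exact measurableSet_le (f := fun p : ℝ × ℝ => |p.2 - p.1 ^ (2 + a)|) (by fun_prop)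
      measurable_const
  have hJi : ∀ x, ∫⁻ l, J x l = ENNReal.ofReal (2 * M) := fun x => lintegral_band _ _
  have hJx : ∀ x, Measurable (J x) := fun x => hJm.comp (g := fun p : ℝ × ℝ => J p.1 p.2)
    (by fun_prop : Measurable (fun l : ℝ => (x, l)))
  have hTx : ∀ x, Measurable (fun y => T.indicator (1 : ℝ × ℝ → ENNReal) (x, y)) := fun x =>
    (measurable_one.indicator hTm).comp (by fun_prop : Measurable (fun l : ℝ => (x, l)))
  have hTi : Measurable (T.indicator (1 : ℝ × ℝ → ENNReal)) := measurable_one.indicator hTm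
  have hbound : ∀ w : (ℝ × ℝ) × (ℝ × ℝ), A w.1 * A w.2 * A ((s, τ) - w.1 - w.2) ≤
      ENNReal.ofReal (s ^ a) *
        (J w.1.1 w.1.2 * (J w.2.1 w.2.2 * T.indicator 1 (w.1.1, w.2.1))) := by
    rintro ⟨⟨x, l⟩, ⟨y, m⟩⟩
    by_cases h1 : (x, l) ∈ strip a M
    swap
    · simp [A, h1]
    by_cases h2 : (y, m) ∈ strip a M
    swap
    · simp [A, h2]
    by_cases h3 : (s, τ) - (x, l) - (y, m) ∈ strip a M
    swap
    · have : A ((s, τ) - (x, l) - (y, m)) = 0 := Set.indicator_of_notMem h3 _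
      simp only [this, mul_zero, zero_le]
    have h3' : (s - x - y, τ - l - m) ∈ strip a M := h3
    obtain ⟨x0, hl⟩ := h1
    obtain ⟨y0, hm⟩ := h2
    obtain ⟨z0, hn⟩ := h3'
    simp only at x0 y0 z0 hl hm hn
    have hmem : (x, y) ∈ T := by
      refine ⟨x0, y0, z0, ?_⟩
      simp only
      rw [abs_le] at *
      constructor <;> linarith [hl.1, hl.2, hm.1, hm.2, hn.1, hn.2]
    have e1 : J x l = 1 := by simp [J, hl]
    have e2 : J y m = 1 := by simp [J, hm]
    have e3 : A (x, l) = ENNReal.ofReal (x ^ (a / 3)) := by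
      simp only [A]; rw [Set.indicator_of_mem (show (x, l) ∈ strip a M from ⟨x0, hl⟩)]
    have e4 : A (y, m) = ENNReal.ofReal (y ^ (a / 3)) := by
      simp only [A]; rw [Set.indicator_of_mem (show (y, m) ∈ strip a M from ⟨y0, hm⟩)]
    have e5 : A ((s, τ) - (x, l) - (y, m)) = ENNReal.ofReal ((s - x - y) ^ (a / 3)) := by
      simp only [A]; rw [Set.indicator_of_mem h3]; simp
    simp only [e1, e2, e3, e4, e5, Set.indicator_of_mem hmem, Pi.one_apply, mul_one]
    rw [← ENNReal.ofReal_mul (by positivity), ← ENNReal.ofReal_mul (by positivity)]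
    refine ENNReal.ofReal_le_ofReal ?_
    have ha3 : 0 ≤ a / 3 := by positivity
    calc x ^ (a / 3) * y ^ (a / 3) * (s - x - y) ^ (a / 3)
        ≤ s ^ (a / 3) * s ^ (a / 3) * s ^ (a / 3) := by
          gcongr <;> linarith
      _ = s ^ a := by
          rw [← Real.rpow_add hs, ← Real.rpow_add hs]; congr 1; ring
  have hin : Measurable (fun w : (ℝ × ℝ) × (ℝ × ℝ) =>
      J w.1.1 w.1.2 * (J w.2.1 w.2.2 * T.indicator (1 : ℝ × ℝ → ENNReal) (w.1.1, w.2.1))) := by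
    refine (hJm.comp measurable_fst).mul ((hJm.comp measurable_snd).mul (hTi.comp ?_))
    fun_prop
  calc _ ≤ ∫⁻ w : (ℝ × ℝ) × (ℝ × ℝ), ENNReal.ofReal (s ^ a) *
        (J w.1.1 w.1.2 * (J w.2.1 w.2.2 * T.indicator 1 (w.1.1, w.2.1))) := lintegral_mono hbound
    _ = ENNReal.ofReal (s ^ a) * ∫⁻ t : ℝ × ℝ, ∫⁻ r : ℝ × ℝ,
        J t.1 t.2 * (J r.1 r.2 * T.indicator 1 (t.1, r.1)) := by
        rw [lintegral_const_mul _ hin, Measure.volume_eq_prod, lintegral_prod _ hin.aemeasurable]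
    _ = ENNReal.ofReal (s ^ a) * ∫⁻ t : ℝ × ℝ,
        J t.1 t.2 * (ENNReal.ofReal (2 * M) * ∫⁻ y : ℝ, T.indicator 1 (t.1, y)) := by
        congr 1
        refine lintegral_congr fun t => ?_
        have hm1 : Measurable (fun r : ℝ × ℝ =>
            J r.1 r.2 * T.indicator (1 : ℝ × ℝ → ENNReal) (t.1, r.1)) :=
          hJm.mul (hTi.comp (by fun_prop))
        rw [lintegral_const_mul _ hm1, Measure.volume_eq_prod, lintegral_prod _ hm1.aemeasurable]
        congr 1
        rw [← lintegral_const_mul _ (hTx t.1)]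
        refine lintegral_congr fun y => ?_
        simp only
        rw [lintegral_mul_const _ (hJx y), hJi]
    _ = ENNReal.ofReal (s ^ a) * (ENNReal.ofReal (2 * M) * (ENNReal.ofReal (2 * M) *
        volume T)) := by
        congr 1
        have hm2 : Measurable (fun x : ℝ => ∫⁻ y : ℝ, T.indicator (1 : ℝ × ℝ → ENNReal) (x, y)) :=
          hTi.lintegral_prod_right'
        have hm3 : Measurable (fun t : ℝ × ℝ => J t.1 t.2 *
            (ENNReal.ofReal (2 * M) * ∫⁻ y : ℝ, T.indicator (1 : ℝ × ℝ → ENNReal) (t.1, y))) :=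
          hJm.mul ((hm2.comp measurable_fst).const_mul _)
        rw [Measure.volume_eq_prod, lintegral_prod _ hm3.aemeasurable,
          ← lintegral_indicator_one hTm, lintegral_prod _ hTi.aemeasurable,
          ← lintegral_const_mul _ hm2, ← lintegral_const_mul _ (hm2.const_mul _)]
        refine lintegral_congr fun x => ?_
        simp only
        rw [lintegral_mul_const _ (hJx x), hJi]
    _ ≤ ENNReal.ofReal (s ^ a) * (ENNReal.ofReal (2 * M) * (ENNReal.ofReal (2 * M) *
        (ENNReal.ofReal (3 * M / (s / 3) ^ a) * ENNReal.ofReal (2 * Real.pi)))) := by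
        gcongr
        exact volume_simplexShell_le a s τ (3 * M) ha0 hs
    _ ≤ _ := by
        have hs3 : 0 < (s / 3) ^ a := by positivity
        have hpi := Real.pi_pos
        rw [← ENNReal.ofReal_mul (by positivity), ← ENNReal.ofReal_mul (by positivity),
          ← ENNReal.ofReal_mul (by positivity), ← ENNReal.ofReal_mul (by positivity)]
        refine ENNReal.ofReal_le_ofReal ?_
        have h3 : (3 : ℝ) ^ a ≤ 3 := by
          simpa using Real.rpow_le_rpow_of_exponent_le (by norm_num : (1 : ℝ) ≤ 3) ha1
        rw [Real.div_rpow hs.le (by norm_num)]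
        have hsa : 0 < s ^ a := by positivity
        have : s ^ a * (2 * M * (2 * M * (3 * M / (s ^ a / 3 ^ a) * (2 * Real.pi))))
            = 24 * Real.pi * M ^ 3 * 3 ^ a := by
          field_simp
          ring
        rw [this]
        have : 0 ≤ 24 * Real.pi * M ^ 3 := by positivity
        nlinarith

lemma cauchy_schwarz_lintegral {α : Type*} [MeasurableSpace α] (μ : Measure α)
    {f g : α → ENNReal} (hf : AEMeasurable f μ) (hg : AEMeasurable g μ) :
    (∫⁻ x, f x * g x ∂μ) ^ 2 ≤ (∫⁻ x, f x ^ 2 ∂μ) * ∫⁻ x, g x ^ 2 ∂μ := by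
  have h := ENNReal.lintegral_mul_le_Lp_mul_Lq μ (p := 2) (q := 2)
    (Real.HolderConjugate.two_two) hf hg
  simp only [Pi.mul_apply, ENNReal.rpow_two] at h
  calc (∫⁻ x, f x * g x ∂μ) ^ 2
      ≤ ((∫⁻ x, f x ^ 2 ∂μ) ^ (1 / 2 : ℝ) * (∫⁻ x, g x ^ 2 ∂μ) ^ (1 / 2 : ℝ)) ^ 2 := by gcongr
    _ = _ := by
      rw [mul_pow, ← ENNReal.rpow_natCast, ← ENNReal.rpow_natCast, ← ENNReal.rpow_mul,
        ← ENNReal.rpow_mul]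
      norm_num

/-! ### The trilinear estimate -/

open scoped Convolution in
lemma enorm_triple_convolution_le (G : ℝ × ℝ → ℂ) (hG : Measurable G) (P : ℝ × ℝ) :
    ‖(G ⋆[ContinuousLinearMap.mul ℂ ℂ] (G ⋆[ContinuousLinearMap.mul ℂ ℂ] G)) P‖ₑ
      ≤ ∫⁻ w : (ℝ × ℝ) × (ℝ × ℝ), ‖G w.1‖ₑ * ‖G w.2‖ₑ * ‖G (P - w.1 - w.2)‖ₑ := by
  have hm : Measurable (fun w : (ℝ × ℝ) × (ℝ × ℝ) =>
      ‖G w.1‖ₑ * ‖G w.2‖ₑ * ‖G (P - w.1 - w.2)‖ₑ) := by fun_prop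
  rw [Measure.volume_eq_prod (ℝ × ℝ) (ℝ × ℝ), lintegral_prod _ hm.aemeasurable, convolution_def]
  refine (enorm_integral_le_lintegral_enorm _).trans (lintegral_mono fun t => ?_)
  simp only [ContinuousLinearMap.mul_apply', enorm_mul, convolution_def]
  refine (mul_le_mul_right (enorm_integral_le_lintegral_enorm _) _).trans (le_of_eq ?_)
  simp only [enorm_mul]
  rw [← lintegral_const_mul _ (by fun_prop)]
  simp only [mul_assoc]

/-- Total mass of a triple convolution of a nonnegative function. -/
lemma lintegral_triple (b : ℝ × ℝ → ENNReal) (hb : Measurable b) :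
    ∫⁻ P, ∫⁻ w : (ℝ × ℝ) × (ℝ × ℝ), b w.1 * b w.2 * b (P - w.1 - w.2) = (∫⁻ p, b p) ^ 3 := by
  rw [lintegral_lintegral_swap (by fun_prop)]
  have h1 : ∀ w : (ℝ × ℝ) × (ℝ × ℝ), ∫⁻ P, b w.1 * b w.2 * b (P - w.1 - w.2)
      = b w.1 * b w.2 * ∫⁻ p, b p := fun w => by
    rw [lintegral_const_mul _ (by fun_prop)]
    congr 1
    simp_rw [sub_sub]
    exact lintegral_sub_right_eq_self b (w.1 + w.2)
  simp_rw [h1]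
  rw [lintegral_mul_const _ (by fun_prop), Measure.volume_eq_prod,
    lintegral_prod_mul hb.aemeasurable hb.aemeasurable]
  ring

open scoped Convolution in
/-- The trilinear `L⁶` estimate with a gain of `a / 6` derivatives. Cauchy–Schwarz is applied to
`|G| = α β` with `α = ξ ^ (a/6)` on the strip and `β = ξ ^ (-a/6) |G|`. -/
lemma L6_strip (a M : ℝ) (ha : a ∈ Set.Icc (0 : ℝ) 1) (hM : 0 ≤ M) {G : ℝ × ℝ → ℂ}
    (hGm : Measurable G) (hGi : Integrable G) (hS : ∀ p, G p ≠ 0 → p ∈ strip a M) :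
    ∫⁻ z, ‖iFT G z‖ₑ ^ 6 ≤ ENNReal.ofReal (576 * Real.pi ^ 3 * M ^ 3) *
      (∫⁻ p, ‖G p‖ₑ ^ 2 * ENNReal.ofReal (p.1 ^ (-(a / 3)))) ^ 3 := by
  set G2 := G ⋆[ContinuousLinearMap.mul ℂ ℂ] G with hG2
  set H := G ⋆[ContinuousLinearMap.mul ℂ ℂ] G2 with hH
  have hG2i : Integrable G2 := hGi.integrable_convolution _ hGi
  have hHi : Integrable H := hGi.integrable_convolution _ hG2i
  set α : ℝ × ℝ → ENNReal := (strip a M).indicator (fun p => ENNReal.ofReal (p.1 ^ (a / 6)))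
    with hα
  set β : ℝ × ℝ → ENNReal := fun p => ‖G p‖ₑ * ENNReal.ofReal (p.1 ^ (-(a / 6))) with hβ
  have hαm : Measurable α := by
    refine Measurable.indicator ?_ (measurableSet_strip a M)
    fun_prop
  have hβm : Measurable β := by fun_prop
  have hαβ : ∀ p, ‖G p‖ₑ = α p * β p := by
    intro p
    by_cases hp : G p = 0
    · simp [β, hp]
    have hpS := hS p hp
    have h0 : 0 < p.1 := hpS.1
    simp only [α, β, Set.indicator_of_mem hpS]
    rw [mul_left_comm, ← ENNReal.ofReal_mul (by positivity), ← Real.rpow_add h0]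
    simp
  have hα2 : ∀ p, α p ^ 2 =
      (strip a M).indicator (fun p => ENNReal.ofReal (p.1 ^ (a / 3))) p := by
    intro p
    by_cases hpS : p ∈ strip a M
    · have h0 : 0 < p.1 := hpS.1
      simp only [α, Set.indicator_of_mem hpS]
      rw [← ENNReal.ofReal_pow (by positivity), ← Real.rpow_mul_natCast h0.le]
      congr 2
      push_cast
      ring
    · simp [α, hpS]
  have hβ2 : ∀ p, β p ^ 2 = ‖G p‖ₑ ^ 2 * ENNReal.ofReal (p.1 ^ (-(a / 3))) := by
    intro p
    by_cases hp : G p = 0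
    · simp [β, hp]
    have h0 : 0 < p.1 := (hS p hp).1
    simp only [β, mul_pow]
    rw [← ENNReal.ofReal_pow (by positivity), ← Real.rpow_mul_natCast h0.le]
    congr 3
    push_cast
    ring
  have hHP : ∀ P, ‖H P‖ₑ ^ 2 ≤ ENNReal.ofReal (72 * Real.pi * M ^ 3) *
      ∫⁻ w : (ℝ × ℝ) × (ℝ × ℝ), β w.1 ^ 2 * β w.2 ^ 2 * β (P - w.1 - w.2) ^ 2 := by
    intro P
    calc ‖H P‖ₑ ^ 2
        ≤ (∫⁻ w : (ℝ × ℝ) × (ℝ × ℝ), (α w.1 * α w.2 * α (P - w.1 - w.2)) *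
            (β w.1 * β w.2 * β (P - w.1 - w.2))) ^ 2 := by
          gcongr
          refine (enorm_triple_convolution_le G hGm P).trans
            (le_of_eq (lintegral_congr fun w => ?_))
          rw [hαβ, hαβ, hαβ]
          ring
      _ ≤ _ := cauchy_schwarz_lintegral _ (by fun_prop) (by fun_prop)
      _ ≤ _ := by
          simp only [mul_pow, hα2]
          gcongr
          exact strip_conv_le a M ha hM P
  have hu : ∀ z, ‖iFT G z‖ₑ ^ 6 = ‖iFT H z‖ₑ ^ 2 := by
    intro z
    rw [hH, iFT_convolution hGi hG2i, hG2, iFT_convolution hGi hGi]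
    simp only [enorm_mul]
    ring
  calc ∫⁻ z, ‖iFT G z‖ₑ ^ 6 = ∫⁻ z, ‖iFT H z‖ₑ ^ 2 := lintegral_congr hu
    _ ≤ 2 * (ENNReal.ofReal (4 * Real.pi ^ 2) * ∫⁻ P, ‖H P‖ₑ ^ 2) := plancherel_le hHi
    _ ≤ 2 * (ENNReal.ofReal (4 * Real.pi ^ 2) * ∫⁻ P, ENNReal.ofReal (72 * Real.pi * M ^ 3) *
      ∫⁻ w : (ℝ × ℝ) × (ℝ × ℝ), β w.1 ^ 2 * β w.2 ^ 2 * β (P - w.1 - w.2) ^ 2) := by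
        gcongr with P
        exact hHP P
    _ = 2 * (ENNReal.ofReal (4 * Real.pi ^ 2) * (ENNReal.ofReal (72 * Real.pi * M ^ 3) *
      (∫⁻ p, β p ^ 2) ^ 3)) := by
        rw [lintegral_const_mul' _ _ ENNReal.ofReal_ne_top,
          lintegral_triple (fun p => β p ^ 2) (by fun_prop)]
    _ = _ := by
        simp_rw [hβ2]
        rw [← mul_assoc, ← mul_assoc]
        congr 1
        have hpi := Real.pi_pos
        rw [show (2 : ENNReal) = ENNReal.ofReal 2 by simp, ← ENNReal.ofReal_mul (by positivity),
          ← ENNReal.ofReal_mul (by positivity)]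
        congr 1
        ring

/-! ### Level sets -/

/-- The low-frequency part is controlled pointwise through the measure `2 M R` of the piece
`ξ ≤ R` of the strip. -/
lemma low_freq_le (a M R : ℝ) (hR : 0 ≤ R) {G : ℝ × ℝ → ℂ}
    (hGm : Measurable G) (hS : ∀ p, G p ≠ 0 → p ∈ strip a M) :
    (∫⁻ p, ‖{p : ℝ × ℝ | p.1 ≤ R}.indicator G p‖ₑ) ^ 2
      ≤ ENNReal.ofReal (2 * M * R) * ∫⁻ p, ‖G p‖ₑ ^ 2 := by
  set E : Set (ℝ × ℝ) := {p | p.1 ≤ R} ∩ strip a M with hE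
  have hEm : MeasurableSet E :=
    (measurableSet_le measurable_fst measurable_const).inter (measurableSet_strip a M)
  have h1 : ∀ p, ‖{p : ℝ × ℝ | p.1 ≤ R}.indicator G p‖ₑ = E.indicator 1 p * ‖G p‖ₑ := by
    intro p
    by_cases hp : G p = 0
    · simp [Set.indicator, hp]
    · have := hS p hp
      by_cases hR : p.1 ≤ R <;> simp [Set.indicator, hE, this, hR]
  have hvol : ∫⁻ p, (E.indicator (1 : ℝ × ℝ → ENNReal) p) ^ 2 ≤ ENNReal.ofReal (2 * M * R) := by
    have e : ∀ p, (E.indicator (1 : ℝ × ℝ → ENNReal) p) ^ 2 = E.indicator 1 p := fun p => by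
      by_cases hp : p ∈ E <;> simp [hp]
    simp_rw [e]
    have hm : Measurable (E.indicator (1 : ℝ × ℝ → ENNReal)) := measurable_one.indicator hEm
    rw [Measure.volume_eq_prod, lintegral_prod _ hm.aemeasurable]
    calc ∫⁻ x : ℝ, ∫⁻ y : ℝ, E.indicator (1 : ℝ × ℝ → ENNReal) (x, y)
        ≤ ∫⁻ x : ℝ, (Set.Ioc 0 R).indicator (fun _ => ENNReal.ofReal (2 * M)) x := by
          refine lintegral_mono fun x => ?_
          by_cases hx : x ∈ Set.Ioc 0 R
          · rw [Set.indicator_of_mem hx, ← lintegral_band (x ^ (2 + a)) M]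
            refine lintegral_mono fun y => ?_
            by_cases hy : (x, y) ∈ E
            · have : |y - x ^ (2 + a)| ≤ M := hy.2.2
              simp [hy, this]
            · simp [hy]
          · rw [Set.indicator_of_notMem hx]
            refine le_of_eq (lintegral_eq_zero_of_ae_eq_zero (Filter.Eventually.of_forall ?_))
            intro y
            have : (x, y) ∉ E := fun h => hx ⟨h.2.1, h.1⟩
            simp [this]
      _ = ENNReal.ofReal (2 * M * R) := by
          rw [lintegral_indicator measurableSet_Ioc, setLIntegral_const, Real.volume_Ioc, sub_zero,
            ← ENNReal.ofReal_mul' hR]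
  simp_rw [h1]
  refine (cauchy_schwarz_lintegral _ (measurable_one.indicator hEm).aemeasurable
    hGm.enorm.aemeasurable).trans ?_
  gcongr

/-- The weighted mass `∫_{ξ > R} ξ ^ (-a/3) |G|²`. -/
def hiMass (a : ℝ) (G : ℝ × ℝ → ℂ) (R : ℝ) : ENNReal :=
  ∫⁻ p, {p : ℝ × ℝ | R < p.1}.indicator 1 p * (‖G p‖ₑ ^ 2 * ENNReal.ofReal (p.1 ^ (-(a / 3))))

lemma hiMass_le (a R : ℝ) (ha : 0 ≤ a) (hR : 0 < R) (G : ℝ × ℝ → ℂ) :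
    hiMass a G R ≤ ENNReal.ofReal (R ^ (-(a / 3))) * ∫⁻ p, ‖G p‖ₑ ^ 2 := by
  rw [hiMass, ← lintegral_const_mul' _ _ ENNReal.ofReal_ne_top]
  refine lintegral_mono fun p => ?_
  by_cases hp : R < p.1
  · simp only [Set.indicator, Set.mem_ofPred_eq, hp, if_true, Pi.one_apply, one_mul]
    rw [mul_comm]
    exact mul_le_mul' (ENNReal.ofReal_le_ofReal
      (Real.rpow_le_rpow_of_nonpos hR hp.le (by linarith))) le_rfl
  · simp [Set.indicator, hp]

/-- Distributional estimate: the level `t` is reached only through frequencies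
`ξ > t² / (8 M ‖G‖²)`. -/
lemma level_set_le (a M n t : ℝ) (ha : a ∈ Set.Icc (0 : ℝ) 1) (hM : 0 < M) (hn : 0 < n)
    (ht : 0 < t) {G : ℝ × ℝ → ℂ} (hGm : Measurable G) (hGi : Integrable G)
    (hS : ∀ p, G p ≠ 0 → p ∈ strip a M) (hN : ∫⁻ p, ‖G p‖ₑ ^ 2 = ENNReal.ofReal n) :
    volume {z | t < ‖iFT G z‖} * ENNReal.ofReal (t ^ 6) ≤
      ENNReal.ofReal (64 * (576 * Real.pi ^ 3 * M ^ 3)) *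
        (hiMass a G (t ^ 2 / (8 * (M * n)))) ^ 3 := by
  set R := t ^ 2 / (8 * (M * n)) with hR
  have hR0 : 0 < R := by positivity
  set Glo := {p : ℝ × ℝ | p.1 ≤ R}.indicator G with hGlo
  set Ghi := {p : ℝ × ℝ | R < p.1}.indicator G with hGhi
  have hmlo : MeasurableSet {p : ℝ × ℝ | p.1 ≤ R} :=
    measurableSet_le measurable_fst measurable_const
  have hmhi : MeasurableSet {p : ℝ × ℝ | R < p.1} :=
    measurableSet_lt measurable_const measurable_fst
  have hloi : Integrable Glo := hGi.indicator hmlo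
  have hhii : Integrable Ghi := hGi.indicator hmhi
  have hsum : ∀ z, iFT G z = iFT Glo z + iFT Ghi z := by
    intro z
    rw [← iFT_add hloi hhii]
    congr 1
    ext p
    by_cases hp : p.1 ≤ R
    · have : ¬ R < p.1 := not_lt.2 hp
      simp [Glo, Ghi, hp, this]
    · have : R < p.1 := not_le.1 hp
      simp [Glo, Ghi, hp, this]
  -- the choice of `R` makes the low-frequency bound `(2 M R n) ^ (1/2)` equal to `t / 2`
  have hlo : ∀ z, ‖iFT Glo z‖ ≤ t / 2 := by
    intro z
    have h1 := low_freq_le a M R hR0.le hGm hS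
    rw [hN, ← ENNReal.ofReal_mul (by positivity)] at h1
    have h2 : ‖iFT Glo z‖ₑ ^ 2 ≤ ENNReal.ofReal (2 * M * R * n) :=
      (pow_le_pow_left₀ (zero_le) (enorm_iFT_le Glo z) 2).trans h1
    rw [← ofReal_norm, ← ENNReal.ofReal_pow (norm_nonneg _),
      ENNReal.ofReal_le_ofReal_iff (by positivity)] at h2
    have h3 : 2 * M * R * n = (t / 2) ^ 2 := by
      rw [hR]; field_simp; norm_num
    rw [h3] at h2
    exact le_of_sq_le_sq h2 (by positivity)
  have hsub : {z | t < ‖iFT G z‖} ⊆ {z | ENNReal.ofReal ((t / 2) ^ 6) ≤ ‖iFT Ghi z‖ₑ ^ 6} := by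
    intro z hz
    have hz' : t < ‖iFT G z‖ := hz
    rw [hsum] at hz'
    have h1 := norm_add_le (iFT Glo z) (iFT Ghi z)
    have h2 := hlo z
    have h3 : t / 2 ≤ ‖iFT Ghi z‖ := by linarith
    change ENNReal.ofReal ((t / 2) ^ 6) ≤ ‖iFT Ghi z‖ₑ ^ 6
    rw [← ofReal_norm, ← ENNReal.ofReal_pow (norm_nonneg _)]
    exact ENNReal.ofReal_le_ofReal (pow_le_pow_left₀ (by positivity) h3 6)
  have hL6 := L6_strip a M ha hM.le (hGm.indicator hmhi) hhii (fun p hp => hS p fun h => hp (by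
    simp [Set.indicator, h]))
  have hW : ∫⁻ p, ‖Ghi p‖ₑ ^ 2 * ENNReal.ofReal (p.1 ^ (-(a / 3))) = hiMass a G R := by
    rw [hiMass]
    refine lintegral_congr fun p => ?_
    by_cases hp : R < p.1 <;> simp [Ghi, Set.indicator, hp]
  rw [hW] at hL6
  have hcheb := mul_meas_ge_le_lintegral
    ((continuous_iFT hhii).enorm.measurable.pow_const 6) (ENNReal.ofReal ((t / 2) ^ 6))
    (μ := volume)
  calc volume {z | t < ‖iFT G z‖} * ENNReal.ofReal (t ^ 6)
      ≤ volume {z | ENNReal.ofReal ((t / 2) ^ 6) ≤ ‖iFT Ghi z‖ₑ ^ 6} * ENNReal.ofReal (t ^ 6) := by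
        gcongr
    _ = ENNReal.ofReal 64 * (ENNReal.ofReal ((t / 2) ^ 6) *
        volume {z | ENNReal.ofReal ((t / 2) ^ 6) ≤ ‖iFT Ghi z‖ₑ ^ 6}) := by
        rw [← mul_assoc, ← ENNReal.ofReal_mul (by norm_num), mul_comm]
        congr 2
        ring
    _ ≤ ENNReal.ofReal 64 * (ENNReal.ofReal (576 * Real.pi ^ 3 * M ^ 3) * (hiMass a G R) ^ 3) := by
        exact mul_le_mul' le_rfl (hcheb.trans hL6)
    _ = _ := by
        rw [← mul_assoc, ← ENNReal.ofReal_mul (by norm_num)]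

/-- The time integral left after the layer-cake formula: `t` ranges over `(0, (D x) ^ (1/2))`. -/
lemma lintegral_time_le (a D x : ℝ) (ha : 0 < a) (hD : 0 < D) (hx : 0 < x) :
    ∫⁻ t in Set.Ioi (0 : ℝ), (if t ^ 2 / D < x then 1 else 0) *
      ENNReal.ofReal (t ^ (2 * a / 3 - 1)) ≤
      ENNReal.ofReal (3 / (2 * a) * D ^ (a / 3) * x ^ (a / 3)) := by
  set T := Real.sqrt (D * x) with hT
  have hT0 : 0 < T := Real.sqrt_pos.2 (by positivity)
  have hr : -1 < 2 * a / 3 - 1 := by have : 0 < 2 * a / 3 := by positivity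
                                     linarith
  calc _ ≤ ∫⁻ t in Set.Ioi (0 : ℝ), (Set.Ioc 0 T).indicator
        (fun t => ENNReal.ofReal (t ^ (2 * a / 3 - 1))) t := by
        refine setLIntegral_mono' measurableSet_Ioi fun t ht => ?_
        split_ifs with h
        · have : t ∈ Set.Ioc 0 T := by
            refine ⟨ht, Real.le_sqrt_of_sq_le ?_⟩
            rw [div_lt_iff₀ hD] at h
            linarith
          rw [Set.indicator_of_mem this, one_mul]
        · simp
    _ ≤ ∫⁻ t, (Set.Ioc 0 T).indicator
        (fun t => ENNReal.ofReal (t ^ (2 * a / 3 - 1))) t := setLIntegral_le_lintegral _ _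
    _ = ENNReal.ofReal (∫ t in (0 : ℝ)..T, t ^ (2 * a / 3 - 1)) := by
        rw [lintegral_indicator measurableSet_Ioc, intervalIntegral.integral_of_le hT0.le,
          ofReal_integral_eq_lintegral_ofReal]
        · exact (intervalIntegrable_iff_integrableOn_Ioc_of_le hT0.le).1
            (intervalIntegral.intervalIntegrable_rpow' hr)
        · filter_upwards [ae_restrict_mem measurableSet_Ioc] with t ht
          exact Real.rpow_nonneg ht.1.le _
    _ ≤ _ := by
        rw [integral_rpow (Or.inl hr)]
        refine ENNReal.ofReal_le_ofReal (le_of_eq ?_)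
        rw [sub_add_cancel, Real.zero_rpow (by positivity), sub_zero, hT, Real.sqrt_eq_rpow,
          ← Real.rpow_mul (by positivity), Real.mul_rpow hD.le hx.le,
          show 1 / 2 * (2 * a / 3) = a / 3 by ring]
        field_simp

/-! ### The Strichartz estimate near one half of the curve -/

/-- By Tonelli the `t`-integral produces the factor `ξ ^ (a/3)` that cancels the weight in `hiMass`,
so that only `n = ‖G‖₂²` remains. -/
lemma hiMass_time_le (a D n : ℝ) (ha : 0 < a) (hD : 0 < D) {G : ℝ × ℝ → ℂ}
    (hGm : Measurable G) (hS : ∀ p, G p ≠ 0 → 0 < p.1)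
    (hN : ∫⁻ p, ‖G p‖ₑ ^ 2 = ENNReal.ofReal n) :
    ∫⁻ t in Set.Ioi (0 : ℝ), hiMass a G (t ^ 2 / D) * ENNReal.ofReal (t ^ (2 * a / 3 - 1)) ≤
      ENNReal.ofReal (3 / (2 * a) * D ^ (a / 3) * n) := by
  have hset : MeasurableSet {x : ℝ × (ℝ × ℝ) | x.1 ^ 2 / D < x.2.1} :=
    measurableSet_lt (f := fun x : ℝ × (ℝ × ℝ) => x.1 ^ 2 / D)
      (g := fun x : ℝ × (ℝ × ℝ) => x.2.1) (by fun_prop) (by fun_prop)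
  have hw : Measurable fun t : ℝ => ENNReal.ofReal (t ^ (2 * a / 3 - 1)) :=
    ENNReal.measurable_ofReal.comp (measurable_id.pow_const _)
  have hv : Measurable fun p : ℝ × ℝ => ‖G p‖ₑ ^ 2 * ENNReal.ofReal (p.1 ^ (-(a / 3))) :=
    (hGm.enorm.pow_const 2).mul (ENNReal.measurable_ofReal.comp (measurable_fst.pow_const _))
  have hJ : Measurable fun x : ℝ × (ℝ × ℝ) =>
      (‖G x.2‖ₑ ^ 2 * ENNReal.ofReal (x.2.1 ^ (-(a / 3)))) *
        ((if x.1 ^ 2 / D < x.2.1 then 1 else 0) * ENNReal.ofReal (x.1 ^ (2 * a / 3 - 1))) :=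
    (hv.comp measurable_snd).mul ((Measurable.ite hset measurable_const measurable_const).mul
      (hw.comp measurable_fst))
  calc _ = ∫⁻ t in Set.Ioi (0 : ℝ), ∫⁻ p : ℝ × ℝ,
        (‖G p‖ₑ ^ 2 * ENNReal.ofReal (p.1 ^ (-(a / 3)))) *
        ((if t ^ 2 / D < p.1 then 1 else 0) * ENNReal.ofReal (t ^ (2 * a / 3 - 1))) := by
        refine lintegral_congr fun t => ?_
        rw [hiMass, ← lintegral_mul_const' _ _ ENNReal.ofReal_ne_top]
        refine lintegral_congr fun p => ?_
        by_cases h : t ^ 2 / D < p.1 <;> simp [Set.indicator, h]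
    _ = ∫⁻ p : ℝ × ℝ, ∫⁻ t in Set.Ioi (0 : ℝ),
        (‖G p‖ₑ ^ 2 * ENNReal.ofReal (p.1 ^ (-(a / 3)))) *
        ((if t ^ 2 / D < p.1 then 1 else 0) * ENNReal.ofReal (t ^ (2 * a / 3 - 1))) :=
        lintegral_lintegral_swap hJ.aemeasurable
    _ ≤ ∫⁻ p : ℝ × ℝ, ENNReal.ofReal (3 / (2 * a) * D ^ (a / 3)) * ‖G p‖ₑ ^ 2 := by
        refine lintegral_mono fun p => ?_
        by_cases hp : G p = 0
        · simp [hp]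
        have hp0 := hS p hp
        rw [lintegral_const_mul' _ _ (by finiteness)]
        refine (mul_le_mul' le_rfl (lintegral_time_le a D p.1 ha hD hp0)).trans (le_of_eq ?_)
        rw [mul_assoc, ← ENNReal.ofReal_mul (by positivity), mul_comm]
        congr 2
        rw [Real.rpow_neg hp0.le]
        have := Real.rpow_pos_of_pos hp0 (a / 3)
        field_simp
    _ = _ := by
        rw [lintegral_const_mul' _ _ ENNReal.ofReal_ne_top, hN,
          ← ENNReal.ofReal_mul (by positivity)]

/-- Layer-cake integration of the distributional estimate, for `a > 0`. Two of the three factors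
`hiMass` are estimated by `hiMass_le`, the last one is integrated in `t`. -/
lemma Lq_strip_pos (a M n : ℝ) (ha0 : 0 < a) (ha : a ∈ Set.Icc (0 : ℝ) 1) (hM : 0 < M)
    (hn : 0 < n) {G : ℝ × ℝ → ℂ} (hGm : Measurable G) (hGi : Integrable G)
    (hS : ∀ p, G p ≠ 0 → p ∈ strip a M) (hN : ∫⁻ p, ‖G p‖ₑ ^ 2 = ENNReal.ofReal n) :
    ∫⁻ z, ENNReal.ofReal (‖iFT G z‖ ^ (2 * (3 + a))) ≤
      ENNReal.ofReal ((2 * (3 + a)) * (64 * (576 * Real.pi ^ 3)) * 8 ^ a * (3 / (2 * a)) *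
        (M * n) ^ (3 + a)) := by
  set D := 8 * (M * n) with hD
  have hD0 : 0 < D := by positivity
  set K := ENNReal.ofReal (64 * (576 * Real.pi ^ 3 * M ^ 3)) with hK
  have hpt : ∀ t ∈ Set.Ioi (0 : ℝ),
      volume {z | t < ‖iFT G z‖} * ENNReal.ofReal (t ^ (2 * (3 + a) - 1)) ≤
        (K * ENNReal.ofReal (n ^ 2 * D ^ (2 * a / 3))) *
          (hiMass a G (t ^ 2 / D) * ENNReal.ofReal (t ^ (2 * a / 3 - 1))) := by
    intro t ht
    have ht0 : 0 < t := ht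
    have e1 : t ^ (2 * (3 + a) - 1) = t ^ 6 * t ^ (2 * a - 1) := by
      rw [← Real.rpow_natCast, ← Real.rpow_add ht0]; congr 1; push_cast; ring
    have h1 := level_set_le a M n t ha hM hn ht0 hGm hGi hS hN
    have h2 := hiMass_le a (t ^ 2 / D) ha0.le (by positivity) G
    rw [hN, ← ENNReal.ofReal_mul (by positivity)] at h2
    rw [e1, ENNReal.ofReal_mul (by positivity), ← mul_assoc]
    refine (mul_le_mul' h1 le_rfl).trans ?_
    rw [← hD, ← hK]
    set H := hiMass a G (t ^ 2 / D)
    have e2 : (((t ^ 2 / D) ^ (-(a / 3)) * n) ^ 2) * t ^ (2 * a - 1) =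
        n ^ 2 * D ^ (2 * a / 3) * t ^ (2 * a / 3 - 1) := by
      have e3 : (t ^ 2 / D) ^ (-(a / 3)) = t ^ (-(2 * a / 3)) * D ^ (a / 3) := by
        rw [Real.div_rpow (by positivity) hD0.le, ← Real.rpow_natCast t 2,
          ← Real.rpow_mul ht0.le, Real.rpow_neg hD0.le, div_inv_eq_mul]
        congr 2; push_cast; ring
      have e4 : t ^ (2 * a / 3 - 1) = t ^ (-(2 * a / 3)) * t ^ (-(2 * a / 3)) * t ^ (2 * a - 1) := by
        rw [← Real.rpow_add ht0, ← Real.rpow_add ht0]; congr 1; ring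
      have e5 : D ^ (2 * a / 3) = D ^ (a / 3) * D ^ (a / 3) := by
        rw [← Real.rpow_add hD0]; congr 1; ring
      rw [e3, e4, e5]; ring
    calc K * H ^ 3 * ENNReal.ofReal (t ^ (2 * a - 1))
        = K * (H ^ 2 * ENNReal.ofReal (t ^ (2 * a - 1))) * H := by ring
      _ ≤ K * ((ENNReal.ofReal ((t ^ 2 / D) ^ (-(a / 3)) * n)) ^ 2 *
            ENNReal.ofReal (t ^ (2 * a - 1))) * H :=
          mul_le_mul' (mul_le_mul' le_rfl (mul_le_mul' (pow_le_pow_left₀ zero_le h2 2) le_rfl))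
            le_rfl
      _ = K * ENNReal.ofReal (n ^ 2 * D ^ (2 * a / 3) * t ^ (2 * a / 3 - 1)) * H := by
          rw [← ENNReal.ofReal_pow (by positivity), ← ENNReal.ofReal_mul (by positivity), e2]
      _ = _ := by
          rw [ENNReal.ofReal_mul (by positivity)]; ring
  rw [lintegral_rpow_eq_lintegral_meas_lt_mul volume
    (Filter.Eventually.of_forall fun z => norm_nonneg _)
    (continuous_iFT hGi).norm.measurable.aemeasurable (by linarith : 0 < 2 * (3 + a))]
  refine (mul_le_mul' le_rfl (setLIntegral_mono' measurableSet_Ioi hpt)).trans ?_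
  rw [lintegral_const_mul' _ _ (by finiteness)]
  refine (mul_le_mul' le_rfl (mul_le_mul' le_rfl (hiMass_time_le a D n ha0 hD0 hGm
    (fun p hp => (hS p hp).1) hN))).trans (le_of_eq ?_)
  rw [hK, ← ENNReal.ofReal_mul (by positivity), ← ENNReal.ofReal_mul (by positivity),
    ← ENNReal.ofReal_mul (by positivity)]
  congr 1
  have e6 : D ^ (2 * a / 3) * D ^ (a / 3) = 8 ^ a * (M * n) ^ a := by
    rw [← Real.rpow_add hD0, ← Real.mul_rpow (by norm_num) (by positivity)]; congr 1; ring
  have e7 : (M * n) ^ (3 + a) = M ^ 3 * n ^ 3 * (M * n) ^ a := by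
    rw [Real.rpow_add (by positivity), ← mul_pow]; congr 1; exact_mod_cast Real.rpow_natCast (M * n) 3
  rw [e7]
  linear_combination (2 * (3 + a)) * (64 * (576 * Real.pi ^ 3 * M ^ 3)) * n ^ 2 *
    (3 / (2 * a)) * n * e6

/-- The Strichartz estimate in `L ^ (2 (3 + a))` for a function supported in one strip over
`ξ > 0`; for `a = 0` it is the `L⁶` estimate itself. -/
lemma Lq_strip (a : ℝ) (ha : a ∈ Set.Icc (0 : ℝ) 1) :
    ∃ C > 0, ∀ (M n : ℝ) (G : ℝ × ℝ → ℂ), 0 < M → 0 ≤ n → Measurable G → Integrable G →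
      (∀ p, G p ≠ 0 → p ∈ strip a M) → ∫⁻ p, ‖G p‖ₑ ^ 2 = ENNReal.ofReal n →
      eLpNorm (iFT G) (ENNReal.ofReal (2 * (3 + a))) volume ≤ ENNReal.ofReal (C * √(M * n)) := by
  have ha0 := ha.1
  have key : ∃ C > 0, ∀ (M n : ℝ) (G : ℝ × ℝ → ℂ), 0 < M → 0 < n → Measurable G → Integrable G →
      (∀ p, G p ≠ 0 → p ∈ strip a M) → ∫⁻ p, ‖G p‖ₑ ^ 2 = ENNReal.ofReal n →
      ∫⁻ z, ENNReal.ofReal (‖iFT G z‖ ^ (2 * (3 + a))) ≤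
        ENNReal.ofReal (C * (M * n) ^ (3 + a)) := by
    rcases ha0.eq_or_lt with h0 | h0
    · subst h0
      refine ⟨576 * Real.pi ^ 3, by positivity, fun M n G hM hn hGm hGi hS hN => ?_⟩
      have h := L6_strip 0 M ha hM.le hGm hGi hS
      simp only [zero_div, neg_zero, Real.rpow_zero, ENNReal.ofReal_one, mul_one, hN] at h
      rw [← ENNReal.ofReal_pow hn.le, ← ENNReal.ofReal_mul (by positivity)] at h
      convert h using 1
      · refine lintegral_congr fun z => ?_
        rw [← ofReal_norm, ← ENNReal.ofReal_pow (norm_nonneg _)]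
        congr 1
        exact_mod_cast Real.rpow_natCast (‖iFT G z‖) 6
      · congr 1
        have : (M * n) ^ ((3 : ℝ) + 0) = (M * n) ^ 3 := by
          rw [add_zero]; exact_mod_cast Real.rpow_natCast (M * n) 3
        rw [this]; ring
    · exact ⟨_, by positivity, fun M n G hM hn hGm hGi hS hN =>
        Lq_strip_pos a M n h0 ha hM hn hGm hGi hS hN⟩
  obtain ⟨C, hC, hkey⟩ := key
  refine ⟨C ^ (1 / (2 * (3 + a))), by positivity, fun M n G hM hn hGm hGi hS hN => ?_⟩
  have hq : 0 < 2 * (3 + a) := by linarith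
  rcases hn.eq_or_lt with h0 | h0
  · subst h0
    have hG0 : G =ᵐ[volume] 0 := by
      rw [ENNReal.ofReal_zero, lintegral_eq_zero_iff (hGm.enorm.pow_const 2)] at hN
      filter_upwards [hN] with p hp
      simpa using hp
    have : iFT G = 0 := by
      ext z
      rw [iFT]
      refine integral_eq_zero_of_ae ?_
      filter_upwards [hG0] with p hp
      simp [hp]
    rw [this, eLpNorm_zero]
    exact zero_le
  · rw [eLpNorm_eq_lintegral_rpow_enorm_toReal (by simpa using hq) ENNReal.ofReal_ne_top,
      ENNReal.toReal_ofReal hq.le]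
    have h := hkey M n G hM h0 hGm hGi hS hN
    have e : ∀ z, ‖iFT G z‖ₑ ^ (2 * (3 + a)) = ENNReal.ofReal (‖iFT G z‖ ^ (2 * (3 + a))) :=
      fun z => by rw [← ofReal_norm, ENNReal.ofReal_rpow_of_nonneg (norm_nonneg _) hq.le]
    simp_rw [e]
    refine (ENNReal.rpow_le_rpow h (by positivity)).trans (le_of_eq ?_)
    rw [ENNReal.ofReal_rpow_of_nonneg (by positivity) (by positivity),
      Real.mul_rpow hC.le (by positivity), ← Real.rpow_mul (by positivity), Real.sqrt_eq_rpow]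
    congr 3
    field_simp

/-! ### The Strichartz estimate near the full curve -/

lemma disp_of_pos (a : ℝ) {x : ℝ} (hx : 0 < x) : disp a x = x ^ (2 + a) := by
  rw [disp, abs_of_pos hx, show 2 + a = 1 + (1 + a) by ring, Real.rpow_add hx 1 (1 + a), Real.rpow_one]

lemma disp_neg (a x : ℝ) : disp a (-x) = -disp a x := by
  simp [disp]

lemma measurable_disp (a : ℝ) : Measurable (disp a) := by
  unfold disp; fun_prop

/-- The Strichartz estimate for a function supported at vertical distance at most `M` from
the full dispersion curve: the two half-curves are exchanged by the reflection `p ↦ -p`. -/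
lemma Lq_curve (a : ℝ) (ha : a ∈ Set.Icc (0 : ℝ) 1) :
    ∃ C > 0, ∀ (M n : ℝ) (G : ℝ × ℝ → ℂ), 0 < M → 0 ≤ n → Measurable G → Integrable G →
      (∀ p, G p ≠ 0 → |p.2 - disp a p.1| ≤ M) → ∫⁻ p, ‖G p‖ₑ ^ 2 ≤ ENNReal.ofReal n →
      eLpNorm (iFT G) (ENNReal.ofReal (2 * (3 + a))) volume ≤ ENNReal.ofReal (C * √(M * n)) := by
  obtain ⟨C, hC, hstrip⟩ := Lq_strip a ha
  refine ⟨2 * C, by positivity, fun M n G hM hn hGm hGi hS hN => ?_⟩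
  -- the one-sided estimate, with an upper bound in place of the exact `L²` mass
  have half : ∀ F : ℝ × ℝ → ℂ, Measurable F → Integrable F →
      (∀ p, F p ≠ 0 → p ∈ strip a M) → ∫⁻ p, ‖F p‖ₑ ^ 2 ≤ ENNReal.ofReal n →
      eLpNorm (iFT F) (ENNReal.ofReal (2 * (3 + a))) volume ≤ ENNReal.ofReal (C * √(M * n)) := by
    intro F hFm hFi hFS hFN
    have hfin : ∫⁻ p, ‖F p‖ₑ ^ 2 ≠ ⊤ := ne_top_of_le_ne_top ENNReal.ofReal_ne_top hFN
    have h := hstrip M (∫⁻ p, ‖F p‖ₑ ^ 2).toReal F hM ENNReal.toReal_nonneg hFm hFi hFS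
      (ENNReal.ofReal_toReal hfin).symm
    refine h.trans (ENNReal.ofReal_le_ofReal ?_)
    have := ENNReal.toReal_le_of_le_ofReal hn hFN
    gcongr
  have hmp : MeasurableSet {p : ℝ × ℝ | 0 < p.1} := measurableSet_lt measurable_const measurable_fst
  have hmn : MeasurableSet {p : ℝ × ℝ | p.1 < 0} := measurableSet_lt measurable_fst measurable_const
  set Gp := {p : ℝ × ℝ | 0 < p.1}.indicator G with hGp
  set Gn := {p : ℝ × ℝ | p.1 < 0}.indicator G with hGn
  have hpi : Integrable Gp := hGi.indicator hmp
  have hni : Integrable Gn := hGi.indicator hmn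
  have hle : ∀ (E : Set (ℝ × ℝ)), ∫⁻ p, ‖E.indicator G p‖ₑ ^ 2 ≤ ENNReal.ofReal n := by
    intro E
    refine (lintegral_mono fun p => ?_).trans hN
    by_cases hp : p ∈ E <;> simp [hp]
  have hnull : ∀ᵐ p : ℝ × ℝ, p.1 ≠ 0 := by
    have h0 : ∀ᵐ x : ℝ, x ≠ 0 := by simp [ae_iff]
    exact Measure.quasiMeasurePreserving_fst.ae h0
  have hsum : iFT G = iFT Gp + iFT Gn := by
    ext z
    rw [Pi.add_apply, ← iFT_add hpi hni]
    refine integral_congr_ae ?_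
    filter_upwards [hnull] with p hp
    rcases lt_or_gt_of_ne hp with h | h
    · simp [Gp, Gn, h, h.le]
    · simp [Gp, Gn, h, h.le]
  have h1 : eLpNorm (iFT Gp) (ENNReal.ofReal (2 * (3 + a))) volume ≤
      ENNReal.ofReal (C * √(M * n)) := by
    refine half Gp (hGm.indicator hmp) hpi (fun p hp => ?_) (hle _)
    have hp0 : 0 < p.1 := by
      by_contra h
      exact hp (by simp [Gp, h])
    have hGp0 : G p ≠ 0 := by simpa [Gp, hp0] using hp
    refine ⟨hp0, ?_⟩
    rw [← disp_of_pos a hp0]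
    exact hS p hGp0
  have h2 : eLpNorm (iFT Gn) (ENNReal.ofReal (2 * (3 + a))) volume ≤
      ENNReal.ofReal (C * √(M * n)) := by
    have hr := half (fun p => Gn (-p)) ((hGm.indicator hmn).comp measurable_neg) hni.comp_neg
      (fun p hp => ?_) ?_
    · have e : iFT Gn = (iFT fun p => Gn (-p)) ∘ Neg.neg := by
        ext z
        exact (iFT_comp_neg Gn z).symm
      rw [e, eLpNorm_comp_measurePreserving (continuous_iFT hni.comp_neg).aestronglyMeasurable
        (Measure.measurePreserving_neg volume)]
      exact hr
    · have hp0 : 0 < p.1 := by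
        by_contra h
        exact hp (by simp [Gn]; intro h'; exact absurd h' h)
      have hGp0 : G (-p) ≠ 0 := by simpa [Gn, hp0] using hp
      refine ⟨hp0, ?_⟩
      have := hS _ hGp0
      rw [Prod.fst_neg, Prod.snd_neg, disp_neg, disp_of_pos a hp0, ← abs_neg] at this
      convert this using 2
      ring
    · have := lintegral_neg_eq_self (μ := (volume : Measure (ℝ × ℝ))) (fun p => ‖Gn p‖ₑ ^ 2)
      rw [this]
      exact hle _
  rw [hsum]
  refine (eLpNorm_add_le (continuous_iFT hpi).aestronglyMeasurable
    (continuous_iFT hni).aestronglyMeasurable ?_).trans ?_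
  · rw [ENNReal.one_le_ofReal]; linarith [ha.1]
  · refine (add_le_add h1 h2).trans (le_of_eq ?_)
    rw [← ENNReal.ofReal_add (by positivity) (by positivity)]
    congr 1; ring

/-! ### Fourier inversion for Schwartz functions -/

open scoped FourierTransform in
/-- The space-time Fourier transform of a Schwartz function is a Schwartz function, and Fourier
inversion holds; both are transported from the inner product space `WithLp 2 (ℝ × ℝ)`. -/
lemma schwartz_FT2 (f : SchwartzMap (ℝ × ℝ) ℂ) :
    ∃ g : SchwartzMap (ℝ × ℝ) ℂ, (∀ p : ℝ × ℝ, FT2 (fun p => f p) p.1 p.2 = g p) ∧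
      ∀ z, f z = (((2 * Real.pi) ^ 2)⁻¹ : ℝ) • iFT g z := by
  let L := WithLp.prodContinuousLinearEquiv 2 ℝ ℝ ℝ
  let F : SchwartzMap (WithLp 2 (ℝ × ℝ)) ℂ := SchwartzMap.compCLMOfContinuousLinearEquiv ℂ L f
  have hpi : (2 * Real.pi) ≠ 0 := by positivity
  let S : (ℝ × ℝ) ≃L[ℝ] (ℝ × ℝ) :=
    ContinuousLinearEquiv.smulLeft (Units.mk0 ((2 * Real.pi)⁻¹) (inv_ne_zero hpi))
  let Fi : SchwartzMap (WithLp 2 (ℝ × ℝ)) ℂ := 𝓕⁻ F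
  let g : SchwartzMap (ℝ × ℝ) ℂ := SchwartzMap.compCLMOfContinuousLinearEquiv ℂ (S.trans L.symm) Fi
  have hg : ∀ p, g p = Fi (WithLp.toLp 2 ((2 * Real.pi)⁻¹ • p)) := fun p => rfl
  have hintegral : ∀ H : WithLp 2 (ℝ × ℝ) → ℂ, ∫ v, H v = ∫ p : ℝ × ℝ, H (WithLp.toLp 2 p) := by
    intro H
    exact ((WithLp.volume_preserving_toLp ℝ ℝ).integral_comp
      (MeasurableEquiv.toLp 2 (ℝ × ℝ)).measurableEmbedding H).symm
  refine ⟨g, fun p => ?_, fun z => ?_⟩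
  · rw [hg]
    change _ = (𝓕⁻ F) _
    rw [SchwartzMap.fourierInv_coe, Real.fourierInv_eq', hintegral, FT2]
    refine integral_congr_ae (Filter.Eventually.of_forall fun q => ?_)
    change _ = _ • f q
    rw [smul_eq_mul]
    dsimp only
    congr 2
    rw [WithLp.prod_inner_apply]
    simp
    field_simp
  · have hinv : F = 𝓕 Fi := by simp [Fi]
    have h1 : f z = F (WithLp.toLp 2 z) := rfl
    rw [h1, hinv, SchwartzMap.fourier_coe, Real.fourier_eq', hintegral, iFT]
    have h2 := Measure.integral_comp_smul (volume : Measure (ℝ × ℝ))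
      (fun p => ph z p * g p) (2 * Real.pi)
    rw [show Module.finrank ℝ (ℝ × ℝ) = 2 by simp, abs_of_pos (by positivity)] at h2
    rw [← h2]
    refine integral_congr_ae (Filter.Eventually.of_forall fun q => ?_)
    dsimp only
    rw [hg, smul_smul, inv_mul_cancel₀ hpi, one_smul, smul_eq_mul, ph]
    congr 2
    rw [WithLp.prod_inner_apply]
    simp
    ring

/-! ### Summation over dyadic modulations -/

lemma chiJ_mem {χ₀ χ : ℝ → ℝ} (hχ : DyadicCutoffs χ₀ χ) (j : ℕ) (z : ℝ) :
    chiJ χ₀ χ j z ∈ Set.Icc (0 : ℝ) 1 := by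
  unfold chiJ
  split_ifs
  exacts [hχ.mem0 _, hχ.mem1 _]

lemma continuous_chiJ {χ₀ χ : ℝ → ℝ} (hχ : DyadicCutoffs χ₀ χ) (j : ℕ) :
    Continuous (chiJ χ₀ χ j) := by
  have h0 := hχ.smooth0.continuous
  have h1 := hχ.smooth1.continuous
  unfold chiJ
  split_ifs <;> fun_prop

lemma chiJ_supp {χ₀ χ : ℝ → ℝ} (hχ : DyadicCutoffs χ₀ χ) (j : ℕ) (z : ℝ)
    (h : chiJ χ₀ χ j z ≠ 0) : |z| ≤ 2 * 2 ^ j ∧ (2 : ℝ) ^ j ≤ 2 * (1 + |z|) := by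
  unfold chiJ at h
  split_ifs at h with hj
  · subst hj
    refine ⟨?_, ?_⟩
    · by_contra h'
      exact h (hχ.supp0 z (by simpa using h'))
    · have := abs_nonneg z
      norm_num; linarith
  · have h2 := hχ.supp1 _ h
    have hp : (0 : ℝ) < 2 ^ j := by positivity
    rw [Real.rpow_neg (by norm_num), Real.rpow_natCast, abs_mul, abs_of_pos (by positivity)] at h2
    obtain ⟨h3, h4⟩ := h2
    rw [inv_mul_eq_div, div_lt_iff₀ hp] at h4
    rw [inv_mul_eq_div, lt_div_iff₀ hp] at h3
    exact ⟨h4.le, by linarith⟩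

/-- The partition of unity as a genuine sum: a non-summable family would have `tsum` equal to `0`. -/
lemma chiJ_hasSum {χ₀ χ : ℝ → ℝ} (hχ : DyadicCutoffs χ₀ χ) (z : ℝ) :
    HasSum (fun j => chiJ χ₀ χ j z) 1 := by
  have hs : Summable fun j => chiJ χ₀ χ j z := by
    by_contra h
    have := hχ.partition z
    rw [tsum_eq_zero_of_not_summable h] at this
    exact zero_ne_one this
  exact hχ.partition z ▸ hs.hasSum

lemma abs_sub_disp_le (a : ℝ) (ha : a ∈ Set.Icc (0 : ℝ) 1) (p : ℝ × ℝ) :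
    1 + |p.2 - disp a p.1| ≤ 2 * (1 + ‖p‖) ^ 3 := by
  have h1 : |p.1| ≤ ‖p‖ := norm_fst_le p
  have h2 : |p.2| ≤ ‖p‖ := norm_snd_le p
  have h0 : 0 ≤ ‖p‖ := norm_nonneg p
  have h3 : |disp a p.1| ≤ ‖p‖ * (1 + ‖p‖) ^ 2 := by
    rw [disp, abs_mul, abs_of_nonneg (Real.rpow_nonneg (abs_nonneg p.1) _)]
    refine mul_le_mul h1 ?_ (by positivity) h0
    calc |p.1| ^ (1 + a) ≤ (1 + ‖p‖) ^ (1 + a) :=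
          Real.rpow_le_rpow (abs_nonneg _) (by linarith) (by linarith [ha.1])
      _ ≤ (1 + ‖p‖) ^ (2 : ℝ) :=
          Real.rpow_le_rpow_of_exponent_le (by linarith) (by linarith [ha.2])
      _ = (1 + ‖p‖) ^ 2 := by exact_mod_cast Real.rpow_natCast _ 2
  have h4 := abs_sub p.2 (disp a p.1)
  nlinarith [pow_nonneg h0 2, pow_nonneg h0 3]

lemma integrable_weight (a : ℝ) (ha : a ∈ Set.Icc (0 : ℝ) 1) (g : SchwartzMap (ℝ × ℝ) ℂ) :
    Integrable fun p : ℝ × ℝ => (1 + |p.2 - disp a p.1|) ^ 2 * ‖g p‖ ^ 2 := by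
  set K := SchwartzMap.seminorm ℝ 0 0 g
  have h0 := g.integrable_pow_mul volume 0
  have h6 := g.integrable_pow_mul volume 6
  have hm := measurable_disp a
  have hgm := g.continuous.measurable
  refine Integrable.mono' ((h0.add h6).const_mul (4 * K * 32)) ?_ ?_
  · refine Measurable.aestronglyMeasurable ?_
    have : Measurable fun p : ℝ × ℝ => disp a p.1 := hm.comp measurable_fst
    fun_prop
  · refine Filter.Eventually.of_forall fun p => ?_
    have hK : ‖g p‖ ≤ K := SchwartzMap.norm_le_seminorm ℝ g p
    have h1 := abs_sub_disp_le a ha p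
    have h2 := add_pow_le (zero_le_one) (norm_nonneg p) 6
    norm_num at h2
    rw [Real.norm_of_nonneg (by positivity)]
    simp only [Pi.add_apply, pow_zero, one_mul]
    calc (1 + |p.2 - disp a p.1|) ^ 2 * ‖g p‖ ^ 2
        ≤ (2 * (1 + ‖p‖) ^ 3) ^ 2 * (K * ‖g p‖) := by
          rw [sq ‖g p‖]
          gcongr
      _ = 4 * K * ((1 + ‖p‖) ^ 6) * ‖g p‖ := by ring
      _ ≤ 4 * K * (32 * (1 + ‖p‖ ^ 6)) * ‖g p‖ := by
          have : 0 ≤ K := (norm_nonneg _).trans hK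
          gcongr
      _ = _ := by ring

/-- The `χ_j`-weighted `L²` mass of a Schwartz function is `O(4 ^ (-j))`, so the series defining the
`X`-norm converges. -/
lemma summable_pieces (a : ℝ) (ha : a ∈ Set.Icc (0 : ℝ) 1) {χ₀ χ : ℝ → ℝ}
    (hχ : DyadicCutoffs χ₀ χ) (g : SchwartzMap (ℝ × ℝ) ℂ) :
    Summable fun j : ℕ => √(2 ^ j * ∫ p : ℝ × ℝ, chiJ χ₀ χ j (p.2 - disp a p.1) * ‖g p‖ ^ 2) := by
  set B := ∫ p : ℝ × ℝ, (1 + |p.2 - disp a p.1|) ^ 2 * ‖g p‖ ^ 2 with hB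
  have hB0 : 0 ≤ B := integral_nonneg fun p => by positivity
  have hI : ∀ j : ℕ, ∫ p : ℝ × ℝ, chiJ χ₀ χ j (p.2 - disp a p.1) * ‖g p‖ ^ 2 ≤
      4 * ((2 ^ j) ^ 2)⁻¹ * B := by
    intro j
    rw [hB, ← integral_const_mul]
    refine integral_mono_of_nonneg (Filter.Eventually.of_forall fun p => ?_)
      ((integrable_weight a ha g).const_mul _) (Filter.Eventually.of_forall fun p => ?_)
    · exact mul_nonneg (chiJ_mem hχ j _).1 (by positivity)
    · dsimp only
      rw [← mul_assoc]
      refine mul_le_mul_of_nonneg_right ?_ (by positivity)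
      by_cases h : chiJ χ₀ χ j (p.2 - disp a p.1) = 0
      · rw [h]; positivity
      · refine (chiJ_mem hχ j _).2.trans ?_
        have h2 := (chiJ_supp hχ j _ h).2
        have hp : (0 : ℝ) < 2 ^ j := by positivity
        have h3 := pow_le_pow_left₀ hp.le h2 2
        rw [mul_right_comm, ← div_eq_mul_inv, le_div_iff₀ (by positivity)]
        linarith
  have hr : (√(1 / 2) : ℝ) < 1 := by
    rw [Real.sqrt_lt' one_pos]; norm_num
  refine Summable.of_nonneg_of_le (fun j => Real.sqrt_nonneg _) (fun j => ?_)
    ((summable_geometric_of_lt_one (Real.sqrt_nonneg _) hr).mul_left (√(4 * B)))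
  have hp : (0 : ℝ) < 2 ^ j := by positivity
  have e : √(4 * B) * √(1 / 2) ^ j = √(2 ^ j * (4 * ((2 ^ j) ^ 2)⁻¹ * B)) := by
    have hpow : ∀ k : ℕ, √(1 / 2 : ℝ) ^ k = √((1 / 2) ^ k) := by
      intro k
      induction k with
      | zero => simp
      | succ k ih => rw [pow_succ, pow_succ, Real.sqrt_mul (by positivity), ih]
    rw [hpow, ← Real.sqrt_mul (by positivity), one_div, inv_pow]
    congr 1
    field_simp
  rw [e]
  exact Real.sqrt_le_sqrt (mul_le_mul_of_nonneg_left (hI j) hp.le)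

/-- Summation of the dyadic pieces `χ_j(λ - ω(ξ)) g`; the right-hand side is the `X`-norm with
`b = 1/2`, `s = 0`, written with square roots. -/
lemma Lp_pieces (a : ℝ) (ha : a ∈ Set.Icc (0 : ℝ) 1) {χ₀ χ : ℝ → ℝ}
    (hχ : DyadicCutoffs χ₀ χ) :
    ∃ C > 0, ∀ g : SchwartzMap (ℝ × ℝ) ℂ,
      eLpNorm (iFT g) (ENNReal.ofReal (2 * (3 + a))) volume ≤ ENNReal.ofReal (C *
        ∑' j : ℕ, √(2 ^ j * ∫ p : ℝ × ℝ, chiJ χ₀ χ j (p.2 - disp a p.1) * ‖g p‖ ^ 2)) := by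
  obtain ⟨C, hC, hcurve⟩ := Lq_curve a ha
  refine ⟨C * √2, by positivity, fun g => ?_⟩
  set q := ENNReal.ofReal (2 * (3 + a)) with hq
  have hq1 : 1 ≤ q := by rw [hq, ENNReal.one_le_ofReal]; linarith [ha.1]
  set w : ℕ → ℝ × ℝ → ℝ := fun j p => chiJ χ₀ χ j (p.2 - disp a p.1) with hw
  have hwm : ∀ j, Measurable (w j) := fun j => (continuous_chiJ hχ j).measurable.comp
    (measurable_snd.sub ((measurable_disp a).comp measurable_fst))
  have hw0 : ∀ j p, 0 ≤ w j p := fun j p => (chiJ_mem hχ j _).1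
  have hw1 : ∀ j p, w j p ≤ 1 := fun j p => (chiJ_mem hχ j _).2
  have hgm := g.continuous.measurable
  have hgi : Integrable g := g.integrable
  set G : ℕ → ℝ × ℝ → ℂ := fun j p => (w j p : ℂ) * g p with hG
  have hGm : ∀ j, Measurable (G j) := fun j => (Complex.measurable_ofReal.comp (hwm j)).mul hgm
  have hGle : ∀ j p, ‖G j p‖ ≤ ‖g p‖ := fun j p => by
    simp only [G, norm_mul, Complex.norm_real, Real.norm_of_nonneg (hw0 j p)]
    exact mul_le_of_le_one_left (norm_nonneg _) (hw1 j p)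
  have hGi : ∀ j, Integrable (G j) := fun j =>
    hgi.mono (hGm j).aestronglyMeasurable (Filter.Eventually.of_forall (hGle j))
  have hg2 : Integrable fun p => ‖g p‖ ^ 2 := (g.memLp 2 volume).integrable_norm_pow two_ne_zero
  have hintegral : ∀ j, Integrable fun p => w j p * ‖g p‖ ^ 2 := fun j => by
    refine hg2.mono ((hwm j).mul (hgm.norm.pow_const 2)).aestronglyMeasurable
      (Filter.Eventually.of_forall fun p => ?_)
    rw [norm_mul, Real.norm_of_nonneg (hw0 j p)]
    exact mul_le_of_le_one_left (norm_nonneg _) (hw1 j p)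
  set J : ℕ → ℝ := fun j => ∫ p, w j p * ‖g p‖ ^ 2 with hJ
  have hJ0 : ∀ j, 0 ≤ J j := fun j => integral_nonneg fun p => mul_nonneg (hw0 j p) (by positivity)
  have hpiece : ∀ j, eLpNorm (iFT (G j)) q volume ≤ ENNReal.ofReal (C * √2 * √(2 ^ j * J j)) := by
    intro j
    have := hcurve (2 * 2 ^ j) (J j) (G j) (by positivity) (hJ0 j) (hGm j) (hGi j) ?_ ?_
    · rwa [mul_assoc 2, Real.sqrt_mul (by norm_num), ← mul_assoc] at this
    · intro p hp
      refine (chiJ_supp hχ j _ fun h => hp ?_).1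
      have : w j p = 0 := h
      simp [G, this]
    · rw [hJ, ofReal_integral_eq_lintegral_ofReal (hintegral j)
        (Filter.Eventually.of_forall fun p => mul_nonneg (hw0 j p) (by positivity))]
      refine lintegral_mono fun p => ?_
      rw [← ofReal_norm, ← ENNReal.ofReal_pow (norm_nonneg _)]
      refine ENNReal.ofReal_le_ofReal ?_
      simp only [G, norm_mul, Complex.norm_real, Real.norm_of_nonneg (hw0 j p), mul_pow]
      refine mul_le_mul_of_nonneg_right ?_ (by positivity)
      nlinarith [hw0 j p, hw1 j p]
  have hsumm : Summable fun j => √(2 ^ j * J j) := summable_pieces a ha hχ g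
  -- partial sums of the dyadic decomposition
  set S : ℕ → ℝ × ℝ → ℂ := fun n z => ∑ j ∈ Finset.range n, iFT (G j) z with hS
  have hSle : ∀ n, eLpNorm (S n) q volume ≤ ENNReal.ofReal (C * √2 * ∑' j, √(2 ^ j * J j)) := by
    intro n
    have e : S n = ∑ j ∈ Finset.range n, iFT (G j) := by ext z; simp [S]
    rw [e]
    refine (eLpNorm_sum_le (fun j _ => (continuous_iFT (hGi j)).aestronglyMeasurable) hq1).trans ?_
    refine (Finset.sum_le_sum fun j _ => hpiece j).trans ?_
    rw [← ENNReal.ofReal_sum_of_nonneg fun j _ => by positivity, ← Finset.mul_sum]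
    refine ENNReal.ofReal_le_ofReal (mul_le_mul_of_nonneg_left ?_ (by positivity))
    exact hsumm.sum_le_tsum _ fun j _ => Real.sqrt_nonneg _
  have hlim : ∀ z, Filter.Tendsto (fun n => S n z) Filter.atTop (nhds (iFT g z)) := by
    intro z
    have e : ∀ n, S n z = ∫ p, ph z p * ∑ j ∈ Finset.range n, G j p := by
      intro n
      simp only [S, iFT, Finset.mul_sum]
      rw [integral_finsetSum _ fun j _ => integrable_ph_mul (hGi j) z]
    simp_rw [e, iFT]
    have hfac : ∀ n p, ∑ j ∈ Finset.range n, G j p =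
        ((∑ j ∈ Finset.range n, w j p : ℝ) : ℂ) * g p := by
      intro n p
      simp only [G, ← Finset.sum_mul, Complex.ofReal_sum]
    refine tendsto_integral_of_dominated_convergence (fun p => ‖g p‖) (fun n => ?_) hgi.norm
      (fun n => Filter.Eventually.of_forall fun p => ?_) (Filter.Eventually.of_forall fun p => ?_)
    · exact ((continuous_ph_right z).measurable.mul
        (Finset.measurable_fun_sum _ fun j _ => hGm j)).aestronglyMeasurable
    · rw [norm_mul, norm_ph, one_mul, hfac, norm_mul, Complex.norm_real,
        Real.norm_of_nonneg (Finset.sum_nonneg fun j _ => hw0 j p)]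
      refine mul_le_of_le_one_left (norm_nonneg _) ?_
      exact sum_le_hasSum _ (fun j _ => hw0 j p) (chiJ_hasSum hχ _)
    · simp_rw [hfac]
      have h1 := (chiJ_hasSum hχ (p.2 - disp a p.1)).tendsto_sum_nat
      have h2 := (Complex.continuous_ofReal.tendsto 1).comp h1
      have h3 := (h2.mul_const (g p)).const_mul (ph z p)
      simpa using h3
  refine (Lp.eLpNorm_lim_le_liminf_eLpNorm (f := S) (fun n => ?_) (iFT g)
    (Filter.Eventually.of_forall hlim)).trans ?_
  · exact (continuous_finsetSum _ fun j _ => continuous_iFT (hGi j)).aestronglyMeasurable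
  · refine (Filter.liminf_le_liminf (Filter.Eventually.of_forall hSle)).trans ?_
    rw [Filter.liminf_const]

/-! ### The embedding -/

theorem statement3 (a : ℝ) (ha : a ∈ Set.Icc (0 : ℝ) 1)
    (χ₀ χ : ℝ → ℝ) (hχ : DyadicCutoffs χ₀ χ) :
    ∃ C > 0, ∀ f : SchwartzMap (ℝ × ℝ) ℂ,
      Lpnorm (2 * (3 + a)) (fun p : ℝ × ℝ => f p) ≤
        C * Xnorm a χ₀ χ (1 / 2) 0 (fun p => f p) := by
  obtain ⟨C, hC, hmain⟩ := Lp_pieces a ha hχ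
  refine ⟨C, hC, fun f => ?_⟩
  obtain ⟨g, hg, hinv⟩ := schwartz_FT2 f
  have hX : Xnorm a χ₀ χ (1 / 2) 0 (fun p => f p) =
      ∑' j : ℕ, √(2 ^ j * ∫ p : ℝ × ℝ, chiJ χ₀ χ j (p.2 - disp a p.1) * ‖g p‖ ^ 2) := by
    rw [Xnorm]
    refine tsum_congr fun j => ?_
    rw [Real.sqrt_mul (by positivity), Real.sqrt_eq_rpow, Real.sqrt_eq_rpow, ← Real.rpow_natCast,
      ← Real.rpow_mul (by norm_num)]
    simp only [hg, mul_zero, Real.rpow_zero, mul_one]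
  have hq : 0 < 2 * (3 + a) := by linarith [ha.1]
  have hmono : eLpNorm f (ENNReal.ofReal (2 * (3 + a))) volume ≤
      eLpNorm (iFT g) (ENNReal.ofReal (2 * (3 + a))) volume := by
    refine eLpNorm_mono fun z => ?_
    rw [hinv z, norm_smul]
    refine mul_le_of_le_one_left (norm_nonneg _) ?_
    rw [Real.norm_of_nonneg (by positivity)]
    refine inv_le_one_of_one_le₀ (one_le_pow₀ ?_)
    linarith [Real.pi_gt_three]
  have hfin := hmono.trans (hmain g)
  rw [← hX, (f.memLp _ volume).eLpNorm_eq_integral_rpow_norm (by simpa using hq)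
    ENNReal.ofReal_ne_top, ENNReal.toReal_ofReal hq.le] at hfin
  have hX0 : 0 ≤ Xnorm a χ₀ χ (1 / 2) 0 (fun p => f p) := by
    rw [hX]; exact tsum_nonneg fun j => Real.sqrt_nonneg _
  rw [Lpnorm, one_div]
  exact (ENNReal.ofReal_le_ofReal_iff (by positivity)).1 hfin
end
end

section
/- Let ψ : ℝ → ℝ be a smooth function supported in [-1,1]. There exists a constant C > 0 such that for every natural number k and every s ∈ ℝ one has | ∫_ℝ e^{ist} t^k ψ(t) dt | ≤ C (1+k)² / (1+|s|)². -/
/-! The oscillatory integral is bounded in two ways. Trivially, `|t ^ k ψ t| ≤ M` on `[-1, 1]` gives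
a bound `2 M`. Integrating by parts twice (`oscillatory_ibp`) shows that `s ^ 2` times the integral is,
up to sign, the oscillatory integral of
`(t ^ k ψ)'' = k (k - 1) t ^ (k - 2) ψ + 2 k t ^ (k - 1) ψ' + t ^ k ψ''`,
which is at most `M (1 + k) ^ 2` on `[-1, 1]` when `M` bounds `ψ`, `ψ'` and `ψ''`. Adding the two
bounds and using `(1 + |s|) ^ 2 ≤ 2 (1 + s ^ 2)` gives the claim with `C = 8 M`. -/

open MeasureTheory Complex

noncomputable section

/-- One integration by parts; compact support removes the boundary terms. -/
lemma oscillatory_ibp (s : ℝ) {g g' : ℝ → ℝ} (hg : ∀ t, HasDerivAt g (g' t) t)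
    (hg' : Continuous g') (hs : HasCompactSupport g) (hs' : HasCompactSupport g') :
    ∫ t : ℝ, Complex.exp (Complex.I * ((s * t : ℝ) : ℂ)) * ((g' t : ℝ) : ℂ) =
      -((Complex.I * s) *
        ∫ t : ℝ, Complex.exp (Complex.I * ((s * t : ℝ) : ℂ)) * ((g t : ℝ) : ℂ)) := by
  have hgc : Continuous g := continuous_iff_continuousAt.2 fun t => (hg t).continuousAt
  have hc : HasCompactSupport (fun t => (g t : ℂ)) := hs.comp_left Complex.ofReal_zero
  have hc' : HasCompactSupport (fun t => (g' t : ℂ)) := hs'.comp_left Complex.ofReal_zero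
  have he : ∀ t : ℝ, HasDerivAt (fun t : ℝ => Complex.exp (Complex.I * ((s * t : ℝ) : ℂ)))
      (Complex.I * s * Complex.exp (Complex.I * ((s * t : ℝ) : ℂ))) t := by
    intro t
    have h1 : HasDerivAt (fun t : ℝ => ((s * t : ℝ) : ℂ)) ((s * 1 : ℝ) : ℂ) t :=
      ((hasDerivAt_id t).const_mul s).ofReal_comp
    convert (h1.const_mul Complex.I).cexp using 1
    push_cast
    ring
  rw [integral_mul_deriv_eq_deriv_mul_of_integrable (fun x _ => he x)
    (fun x _ => (hg x).ofReal_comp)]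
  · simp_rw [mul_assoc, integral_const_mul]
  · exact Continuous.integrable_of_hasCompactSupport (by fun_prop) hc'.mul_left
  · exact Continuous.integrable_of_hasCompactSupport (by fun_prop) hc.mul_left
  · exact Continuous.integrable_of_hasCompactSupport (by fun_prop) hc.mul_left

lemma oscillatory_bound (s : ℝ) {g : ℝ → ℝ} {M : ℝ} (hM : ∀ t, |t| ≤ 1 → |g t| ≤ M)
    (hs : ∀ t, 1 < |t| → g t = 0) :
    ‖∫ t : ℝ, Complex.exp (Complex.I * ((s * t : ℝ) : ℂ)) * ((g t : ℝ) : ℂ)‖ ≤ 2 * M := by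
  rw [← setIntegral_eq_integral_of_forall_compl_eq_zero (s := Set.Icc (-1 : ℝ) 1)]
  · refine (norm_setIntegral_le_of_norm_le_const (C := M) (by simp) ?_).trans (le_of_eq ?_)
    · intro t ht
      rw [norm_mul, mul_comm Complex.I, Complex.norm_exp_ofReal_mul_I, one_mul, Complex.norm_real]
      exact hM t (abs_le.2 ht)
    · simp [Measure.real]
      norm_num [mul_comm]
  · intro t ht
    rw [hs t (not_le.1 fun h => ht (abs_le.1 h))]
    simp

lemma deriv_eq_zero_of_one_lt_abs {g : ℝ → ℝ} (h : ∀ t, 1 < |t| → g t = 0) (t : ℝ)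
    (ht : 1 < |t|) : deriv g t = 0 := by
  have : g =ᶠ[nhds t] fun _ => 0 := by
    filter_upwards [(isOpen_lt continuous_const continuous_abs).mem_nhds ht] with x hx
    exact h x hx
  rw [this.deriv_eq]
  simp

lemma hasCompactSupport_of_one_lt_abs {g : ℝ → ℝ} (h : ∀ t, 1 < |t| → g t = 0) :
    HasCompactSupport g :=
  HasCompactSupport.intro (isCompact_Icc (a := (-1 : ℝ)) (b := 1))
    fun t ht => h t (not_le.1 fun h => ht (abs_le.1 h))

theorem statement19 (ψ : ℝ → ℝ) (hψ : TimeCutoff ψ) :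
    ∃ C > 0, ∀ (k : ℕ) (s : ℝ),
      ‖∫ t : ℝ, Complex.exp (Complex.I * ((s * t : ℝ) : ℂ)) * ((t ^ k * ψ t : ℝ) : ℂ)‖ ≤
        C * (1 + (k : ℝ)) ^ 2 / (1 + |s|) ^ 2 := by
  have h0 : ∀ t, 1 < |t| → ψ t = 0 := fun t ht => by
    by_contra h
    exact absurd (hψ.supp t h) (not_le.2 ht)
  have h1 := deriv_eq_zero_of_one_lt_abs h0
  have h2 := deriv_eq_zero_of_one_lt_abs h1
  have c0 : ContDiff ℝ 2 ψ := contDiff_infty.1 hψ.smooth 2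
  have c1 : ContDiff ℝ 1 (deriv ψ) := ((contDiff_succ_iff_deriv (n := 1)).1 c0).2.2
  have c2 : Continuous (deriv (deriv ψ)) := c1.continuous_deriv le_rfl
  have d0 : ∀ t, HasDerivAt ψ (deriv ψ t) t :=
    fun t => (c0.differentiable (by norm_num) t).hasDerivAt
  have d1 : ∀ t, HasDerivAt (deriv ψ) (deriv (deriv ψ) t) t :=
    fun t => (c1.differentiable (by norm_num) t).hasDerivAt
  obtain ⟨M, hMpos, b0, b1, b2⟩ : ∃ M > 0, (∀ t, |ψ t| ≤ M) ∧ (∀ t, |deriv ψ t| ≤ M) ∧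
      ∀ t, |deriv (deriv ψ) t| ≤ M := by
    obtain ⟨A, hA⟩ := c0.continuous.bounded_above_of_compact_support
      (hasCompactSupport_of_one_lt_abs h0)
    obtain ⟨B, hB⟩ := c1.continuous.bounded_above_of_compact_support
      (hasCompactSupport_of_one_lt_abs h1)
    obtain ⟨D, hD⟩ := c2.bounded_above_of_compact_support (hasCompactSupport_of_one_lt_abs h2)
    simp only [Real.norm_eq_abs] at hA hB hD
    have := (abs_nonneg _).trans (hA 0)
    have := (abs_nonneg _).trans (hB 0)
    have := (abs_nonneg _).trans (hD 0)
    exact ⟨A + B + D + 1, by linarith, fun t => by linarith [hA t], fun t => by linarith [hB t],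
      fun t => by linarith [hD t]⟩
  refine ⟨8 * M, by positivity, fun k s => ?_⟩
  -- In the exponents `k - 1` and `k - 1 - 1` subtraction truncates only where the coefficient
  -- `k`, respectively `k * (k - 1 : ℕ)`, vanishes.
  set f' : ℝ → ℝ := fun t => (k : ℝ) * t ^ (k - 1) * ψ t + t ^ k * deriv ψ t with hf'
  set f'' : ℝ → ℝ := fun t =>
    ((k : ℝ) * (((k - 1 : ℕ) : ℝ) * t ^ (k - 1 - 1)) * ψ t + (k : ℝ) * t ^ (k - 1) * deriv ψ t) +
      ((k : ℝ) * t ^ (k - 1) * deriv ψ t + t ^ k * deriv (deriv ψ) t) with hf''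
  have df : ∀ t, HasDerivAt (fun t => t ^ k * ψ t) (f' t) t :=
    fun t => (hasDerivAt_pow k t).mul (d0 t)
  have df' : ∀ t, HasDerivAt f' (f'' t) t := fun t =>
    (((hasDerivAt_pow (k - 1) t).const_mul (k : ℝ)).mul (d0 t)).add
      ((hasDerivAt_pow k t).mul (d1 t))
  have z0 : ∀ t, 1 < |t| → t ^ k * ψ t = 0 := fun t ht => by simp [h0 t ht]
  have z1 : ∀ t, 1 < |t| → f' t = 0 := fun t ht => by simp [hf', h0 t ht, h1 t ht]
  have z2 : ∀ t, 1 < |t| → f'' t = 0 := fun t ht => by simp [hf'', h0 t ht, h1 t ht, h2 t ht]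
  have cf'' : Continuous f'' := by
    have := c0.continuous
    have := c1.continuous
    fun_prop
  have cf' : Continuous f' := continuous_iff_continuousAt.2 fun t => (df' t).continuousAt
  have e1 := oscillatory_ibp s df cf' (hasCompactSupport_of_one_lt_abs z0)
    (hasCompactSupport_of_one_lt_abs z1)
  have e2 := oscillatory_ibp s df' cf'' (hasCompactSupport_of_one_lt_abs z1)
    (hasCompactSupport_of_one_lt_abs z2)
  have pw : ∀ (n : ℕ) (t : ℝ), |t| ≤ 1 → |t ^ n| ≤ 1 := fun n t ht => by
    rw [abs_pow]
    exact pow_le_one₀ (abs_nonneg t) ht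
  have mb : ∀ (n : ℕ) (t y : ℝ), |t| ≤ 1 → |y| ≤ M → |t ^ n * y| ≤ M := fun n t y ht hy => by
    rw [abs_mul]
    nlinarith [pw n t ht, abs_nonneg y, abs_nonneg (t ^ n)]
  have B0 := oscillatory_bound s (fun t ht => mb k t _ ht (b0 t)) z0
  have B2 := oscillatory_bound (M := M * (1 + (k : ℝ)) ^ 2) s (fun t ht => by
    have hk : (0 : ℝ) ≤ k := k.cast_nonneg
    have hk1 : ((k - 1 : ℕ) : ℝ) ≤ k := by exact_mod_cast Nat.sub_le k 1
    have hk0 : (0 : ℝ) ≤ ((k - 1 : ℕ) : ℝ) := Nat.cast_nonneg _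
    have t1 : |(k : ℝ) * ((k - 1 : ℕ) : ℝ) * (t ^ (k - 1 - 1) * ψ t)| ≤ k * k * M := by
      rw [abs_mul, abs_of_nonneg (mul_nonneg hk hk0)]
      have := mb (k - 1 - 1) t _ ht (b0 t)
      gcongr
    have t2 : |(k : ℝ) * (t ^ (k - 1) * deriv ψ t)| ≤ k * M := by
      rw [abs_mul, abs_of_nonneg hk]
      have := mb (k - 1) t _ ht (b1 t)
      gcongr
    have t3 := mb k t _ ht (b2 t)
    rw [abs_le] at t1 t2 t3 ⊢
    simp only [hf'']
    constructor <;> nlinarith) z2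
  rw [e2, e1] at B2
  simp only [norm_neg, norm_mul, Complex.norm_I, one_mul, Complex.norm_real, Real.norm_eq_abs] at B2
  set N := ‖∫ t : ℝ, Complex.exp (Complex.I * ((s * t : ℝ) : ℂ)) * ((t ^ k * ψ t : ℝ) : ℂ)‖
  have hN : 0 ≤ N := norm_nonneg _
  have hk : (0 : ℝ) ≤ k := k.cast_nonneg
  rw [le_div_iff₀ (by positivity)]
  have hK : M ≤ M * (1 + (k : ℝ)) ^ 2 := le_mul_of_one_le_right hMpos.le (by nlinarith)
  nlinarith [mul_nonneg hN (sq_nonneg (1 - |s|))]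
end
end
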